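/- arXiv:1507.02858 — 12 statements merged into one kernel-verified Lean document; each statement's English description precedes it below -/
import Mathlib

section
/- Let n ≥ 1 and let Z ∈ ℂ^{2n×n} be a normalised Lagrangian frame (ZᵀΩZ = 0 and Z*ΩZ = 2i·Iₙ). Then: (i) Im(ZZ*) = −Ω, i.e. ZZ* = Re(ZZ*) − iΩ; (ii) Re(ZZ*) is a real symmetric, positive definite, symplectic matrix, i.e. Re(ZZ*)ᵀ Ω Re(ZZ*) = Ω, and consequently Re(ZZ*)⁻¹ = Ωᵀ Re(ZZ*) Ω; (iii) Re(ZZ*)·Ω·Z = i·Z and Re(ZZ*)·Ω·Z̄ = −i·Z̄; (iv) (Re(ZZ*)·Ω)² = −I_{2n}. -/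
open Matrix

noncomputable section

/-- The standard symplectic matrix `Ω = [[0, -Iₙ], [Iₙ, 0]]` over `ℝ`. -/
def Omr (n : ℕ) : Matrix (Fin n ⊕ Fin n) (Fin n ⊕ Fin n) ℝ :=
  Matrix.fromBlocks 0 (-1) 1 0

/-- The standard symplectic matrix `Ω = [[0, -Iₙ], [Iₙ, 0]]` over `ℂ`. -/
def Omc (n : ℕ) : Matrix (Fin n ⊕ Fin n) (Fin n ⊕ Fin n) ℂ :=
  Matrix.fromBlocks 0 (-1) 1 0

/-- Entrywise real part of a complex matrix. -/
def reMat {m k : Type*} (M : Matrix m k ℂ) : Matrix m k ℝ :=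
  Matrix.of fun i j => (M i j).re

/-- Entrywise imaginary part of a complex matrix. -/
def imMat {m k : Type*} (M : Matrix m k ℂ) : Matrix m k ℝ :=
  Matrix.of fun i j => (M i j).im

/-!
For a normalised Lagrangian frame `Z`, the conditions on `Z` and their complex conjugates say that
`(2i)⁻¹ [Z* ω; -Zᵀ ω]` is a left inverse of the square matrix `[Z, Z̄]`. It is then also a right
inverse, which gives `(Z Z* - Z̄ Zᵀ) ω = 2i`, that is `Im(Z Z*) = ω⁻¹`; for `ω = Ω` this is `-Ω`.
Consequently `Re(Z Z*) ω = Z Z* ω - i` acts as `i` on `Z` and as `-i` on `Z̄`, so its square is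
`-1`. Symplecticity and invertibility of `Re(Z Z*)` are rearrangements of this identity, and a
positive semidefinite invertible matrix is positive definite.
-/

section ComplexMatrix

variable {m n k : Type*}

lemma map_ofReal_mul [Fintype n] (A : Matrix m n ℝ) (B : Matrix n k ℝ) :
    (A * B).map Complex.ofReal = A.map Complex.ofReal * B.map Complex.ofReal :=
  Matrix.map_mul (f := Complex.ofRealHom)

lemma map_conj_map_ofReal (A : Matrix m n ℝ) :
    (A.map Complex.ofReal).map (starRingEnd ℂ) = A.map Complex.ofReal := by
  ext i j
  simp

lemma conjTranspose_map_conj (M : Matrix m n ℂ) : Mᴴ.map (starRingEnd ℂ) = Mᵀ := by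
  ext i j
  simp

lemma transpose_map_conj (M : Matrix m n ℂ) : Mᵀ.map (starRingEnd ℂ) = Mᴴ :=
  rfl

lemma reMat_add_I_smul_imMat (M : Matrix m n ℂ) :
    (reMat M).map Complex.ofReal + Complex.I • (imMat M).map Complex.ofReal = M := by
  ext i j
  simp [reMat, imMat, mul_comm Complex.I]

lemma sub_map_conj (M : Matrix m n ℂ) :
    M - M.map (starRingEnd ℂ) = (2 * Complex.I) • (imMat M).map Complex.ofReal := by
  ext i j
  simp [imMat, Complex.sub_conj, mul_right_comm]

lemma transpose_reMat_of_isHermitian {M : Matrix m m ℂ} (hM : M.IsHermitian) :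
    (reMat M)ᵀ = reMat M := by
  ext i j
  simp [reMat, ← hM.apply i j]

lemma transpose_imMat_of_isHermitian {M : Matrix m m ℂ} (hM : M.IsHermitian) :
    (imMat M)ᵀ = -imMat M := by
  ext i j
  simp [imMat, ← hM.apply i j]

lemma reMat_mul_conjTranspose [Fintype n] (Z : Matrix m n ℂ) :
    reMat (Z * Zᴴ) = reMat Z * (reMat Z)ᴴ + imMat Z * (imMat Z)ᴴ := by
  ext i j
  simp [reMat, imMat, Matrix.mul_apply, Finset.sum_add_distrib]

lemma posSemidef_reMat_mul_conjTranspose [Finite m] [Fintype n] (Z : Matrix m n ℂ) :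
    (reMat (Z * Zᴴ)).PosSemidef := by
  rw [reMat_mul_conjTranspose]
  exact (posSemidef_self_mul_conjTranspose _).add (posSemidef_self_mul_conjTranspose _)

end ComplexMatrix

/-- A normalised Lagrangian frame for the bilinear form with real matrix `ω`: the columns of `Z`
form an isotropic family of `n` complex vectors in a space of dimension `2n`, orthonormal for the
form `(2i)⁻¹ v* ω w`. The existence of a frame forces `ω` to be skew-symmetric and invertible. -/
structure IsNormalisedLagrangianFrame {m n : Type*} [Fintype m] [Fintype n] [DecidableEq n]
    (ω : Matrix m m ℝ) (Z : Matrix m n ℂ) : Prop where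
  card_eq : Fintype.card m = Fintype.card n + Fintype.card n
  isotropic : Zᵀ * ω.map Complex.ofReal * Z = 0
  normalised : Zᴴ * ω.map Complex.ofReal * Z = (2 * Complex.I) • (1 : Matrix n n ℂ)

namespace IsNormalisedLagrangianFrame

variable {m n : Type*} [Fintype m] [Fintype n] [DecidableEq n] {ω : Matrix m m ℝ}
  {Z : Matrix m n ℂ}

lemma conjTranspose_mul_form_mul_conj (h : IsNormalisedLagrangianFrame ω Z) :
    Zᴴ * ω.map Complex.ofReal * Z.map (starRingEnd ℂ) = 0 := by
  calc Zᴴ * ω.map Complex.ofReal * Z.map (starRingEnd ℂ)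
      = (Zᵀ * ω.map Complex.ofReal * Z).map (starRingEnd ℂ) := by
        simp only [Matrix.map_mul, map_conj_map_ofReal, transpose_map_conj]
    _ = 0 := by rw [h.isotropic, Matrix.map_zero _ (map_zero _)]

lemma transpose_mul_form_mul_conj (h : IsNormalisedLagrangianFrame ω Z) :
    Zᵀ * ω.map Complex.ofReal * Z.map (starRingEnd ℂ) =
      -((2 * Complex.I) • (1 : Matrix n n ℂ)) := by
  calc Zᵀ * ω.map Complex.ofReal * Z.map (starRingEnd ℂ)
      = (Zᴴ * ω.map Complex.ofReal * Z).map (starRingEnd ℂ) := by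
        simp only [Matrix.map_mul, map_conj_map_ofReal, conjTranspose_map_conj]
    _ = -((2 * Complex.I) • (1 : Matrix n n ℂ)) := by
        rw [h.normalised, Matrix.map_smul' _ _ _ (map_mul _)]
        simp [Complex.conj_ofNat]

lemma mul_conjTranspose_sub_conj_mul_transpose_mul_form [DecidableEq m]
    (h : IsNormalisedLagrangianFrame ω Z) :
    (Z * Zᴴ - Z.map (starRingEnd ℂ) * Zᵀ) * ω.map Complex.ofReal =
      (2 * Complex.I) • (1 : Matrix m m ℂ) := by
  have hI : 2 * Complex.I ≠ 0 := by simp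
  have left_inv : fromRows ((2 * Complex.I)⁻¹ • (Zᴴ * ω.map Complex.ofReal))
      (-((2 * Complex.I)⁻¹ • (Zᵀ * ω.map Complex.ofReal))) *
        fromCols Z (Z.map (starRingEnd ℂ)) = 1 := by
    simp only [fromRows_mul_fromCols, Matrix.neg_mul, Matrix.smul_mul, h.isotropic,
      h.normalised, h.conjTranspose_mul_form_mul_conj, h.transpose_mul_form_mul_conj, smul_neg,
      neg_neg, smul_zero, neg_zero, inv_smul_smul₀ hI, fromBlocks_one]
  have right_inv := (fromCols_mul_fromRows_eq_one_comm
    (Fintype.equivOfCardEq (by simpa using h.card_eq)) ..).mpr left_inv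
  rw [← right_inv, fromCols_mul_fromRows, Matrix.mul_neg, Matrix.mul_smul, Matrix.mul_smul,
    ← sub_eq_add_neg, ← smul_sub, smul_inv_smul₀ hI, Matrix.sub_mul, Matrix.mul_assoc,
    Matrix.mul_assoc]

lemma imMat_mul_form [DecidableEq m] (h : IsNormalisedLagrangianFrame ω Z) :
    imMat (Z * Zᴴ) * ω = 1 := by
  have hI : 2 * Complex.I ≠ 0 := by simp
  have hscaled := h.mul_conjTranspose_sub_conj_mul_transpose_mul_form
  rw [← conjTranspose_map_conj Z, ← Matrix.map_mul, sub_map_conj, Matrix.smul_mul] at hscaled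
  apply map_injective Complex.ofReal_injective
  simpa [map_ofReal_mul] using smul_right_injective _ hI hscaled

lemma imMat_eq_inv [DecidableEq m] (h : IsNormalisedLagrangianFrame ω Z) : imMat (Z * Zᴴ) = ω⁻¹ :=
  (inv_eq_left_inv h.imMat_mul_form).symm

lemma transpose_form (h : IsNormalisedLagrangianFrame ω Z) : ωᵀ = -ω := by
  classical
  have hskew : (imMat (Z * Zᴴ))ᵀ = -imMat (Z * Zᴴ) :=
    transpose_imMat_of_isHermitian (isHermitian_mul_conjTranspose_self Z)
  have hleft : -ωᵀ * imMat (Z * Zᴴ) = 1 := by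
    rw [Matrix.neg_mul, ← Matrix.mul_neg, ← hskew, ← transpose_mul, h.imMat_mul_form,
      transpose_one]
  exact neg_eq_iff_eq_neg.mp (left_inv_eq_right_inv hleft h.imMat_mul_form)

lemma mul_conjTranspose_eq [DecidableEq m] (h : IsNormalisedLagrangianFrame ω Z) :
    Z * Zᴴ = (reMat (Z * Zᴴ)).map Complex.ofReal + Complex.I • ω⁻¹.map Complex.ofReal := by
  rw [← h.imMat_eq_inv, reMat_add_I_smul_imMat]

lemma reMat_mul_form [DecidableEq m] (h : IsNormalisedLagrangianFrame ω Z) :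
    (reMat (Z * Zᴴ)).map Complex.ofReal * ω.map Complex.ofReal =
      Z * (Zᴴ * ω.map Complex.ofReal) - Complex.I • 1 := by
  have hinv : (imMat (Z * Zᴴ)).map Complex.ofReal * ω.map Complex.ofReal = 1 := by
    rw [← map_ofReal_mul, h.imMat_mul_form]
    simp
  rw [eq_sub_iff_add_eq, ← Matrix.mul_assoc, ← hinv, ← Matrix.smul_mul, ← Matrix.add_mul,
    reMat_add_I_smul_imMat]

lemma reMat_mul_form_mul (h : IsNormalisedLagrangianFrame ω Z) :
    (reMat (Z * Zᴴ)).map Complex.ofReal * ω.map Complex.ofReal * Z = Complex.I • Z := by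
  classical
  rw [h.reMat_mul_form, Matrix.sub_mul, Matrix.mul_assoc, h.normalised, Matrix.mul_smul,
    Matrix.mul_one, Matrix.smul_mul, Matrix.one_mul, ← sub_smul]
  ring_nf

lemma reMat_mul_form_mul_conj (h : IsNormalisedLagrangianFrame ω Z) :
    (reMat (Z * Zᴴ)).map Complex.ofReal * ω.map Complex.ofReal * Z.map (starRingEnd ℂ) =
      (-Complex.I) • Z.map (starRingEnd ℂ) := by
  classical
  rw [h.reMat_mul_form, Matrix.sub_mul, Matrix.mul_assoc, h.conjTranspose_mul_form_mul_conj,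
    Matrix.mul_zero, Matrix.smul_mul, Matrix.one_mul, zero_sub, neg_smul]

lemma reMat_mul_form_mul_self [DecidableEq m] (h : IsNormalisedLagrangianFrame ω Z) :
    (reMat (Z * Zᴴ) * ω) * (reMat (Z * Zᴴ) * ω) = -1 := by
  apply map_injective Complex.ofReal_injective
  simp only [map_ofReal_mul]
  set P := (reMat (Z * Zᴴ)).map Complex.ofReal * ω.map Complex.ofReal
  have hPZ : P * Z = Complex.I • Z := h.reMat_mul_form_mul
  have hP_add : Z * (Zᴴ * ω.map Complex.ofReal) = P + Complex.I • 1 :=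
    sub_eq_iff_eq_add.mp h.reMat_mul_form.symm
  calc P * P = P * (Z * (Zᴴ * ω.map Complex.ofReal) - Complex.I • 1) := by
        rw [hP_add, add_sub_cancel_right]
    _ = Complex.I • (P + Complex.I • 1) - Complex.I • P := by
        rw [Matrix.mul_sub, ← Matrix.mul_assoc, hPZ, Matrix.smul_mul, hP_add, Matrix.mul_smul,
          Matrix.mul_one]
    _ = -1 := by
        rw [smul_add, smul_smul, Complex.I_mul_I, add_sub_cancel_left, neg_one_smul]
    _ = (-1 : Matrix m m ℝ).map Complex.ofReal := by
        simp [Matrix.map_neg]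

lemma inv_reMat [DecidableEq m] (h : IsNormalisedLagrangianFrame ω Z) :
    (reMat (Z * Zᴴ))⁻¹ = ωᵀ * reMat (Z * Zᴴ) * ω := by
  apply inv_eq_right_inv
  rw [h.transpose_form, Matrix.neg_mul, Matrix.neg_mul, Matrix.mul_neg, Matrix.mul_assoc ω,
    ← Matrix.mul_assoc, h.reMat_mul_form_mul_self, neg_neg]

lemma transpose_reMat_mul_form_mul_reMat [DecidableEq m] (h : IsNormalisedLagrangianFrame ω Z) :
    (reMat (Z * Zᴴ))ᵀ * ω * reMat (Z * Zᴴ) = -ω⁻¹ := by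
  rw [transpose_reMat_of_isHermitian (isHermitian_mul_conjTranspose_self Z),
    ← neg_eq_iff_eq_neg, eq_comm]
  apply inv_eq_left_inv
  rw [Matrix.neg_mul, Matrix.mul_assoc, h.reMat_mul_form_mul_self, neg_neg]

lemma posDef_reMat (h : IsNormalisedLagrangianFrame ω Z) : (reMat (Z * Zᴴ)).PosDef := by
  classical
  refine (posSemidef_reMat_mul_conjTranspose Z).posDef_iff_isUnit.mpr ?_
  refine IsUnit.of_mul_eq_one (-(ω * (reMat (Z * Zᴴ) * ω))) ?_
  rw [Matrix.mul_neg, ← Matrix.mul_assoc, h.reMat_mul_form_mul_self, neg_neg]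

end IsNormalisedLagrangianFrame

theorem stmt2_general {m n : Type*} [Fintype m] [Fintype n] [DecidableEq m] [DecidableEq n]
    {ω : Matrix m m ℝ} {Z : Matrix m n ℂ} (h : IsNormalisedLagrangianFrame ω Z) :
    (imMat (Z * Zᴴ) = ω⁻¹) ∧
    (Z * Zᴴ = (reMat (Z * Zᴴ)).map Complex.ofReal + Complex.I • ω⁻¹.map Complex.ofReal) ∧
    ((reMat (Z * Zᴴ))ᵀ = reMat (Z * Zᴴ)) ∧
    (reMat (Z * Zᴴ)).PosDef ∧
    ((reMat (Z * Zᴴ))ᵀ * ω * reMat (Z * Zᴴ) = -ω⁻¹) ∧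
    ((reMat (Z * Zᴴ))⁻¹ = ωᵀ * reMat (Z * Zᴴ) * ω) ∧
    ((reMat (Z * Zᴴ)).map Complex.ofReal * ω.map Complex.ofReal * Z = Complex.I • Z) ∧
    ((reMat (Z * Zᴴ)).map Complex.ofReal * ω.map Complex.ofReal * Z.map (starRingEnd ℂ) =
      (-Complex.I) • Z.map (starRingEnd ℂ)) ∧
    ((reMat (Z * Zᴴ) * ω) * (reMat (Z * Zᴴ) * ω) = -1) :=
  ⟨h.imMat_eq_inv, h.mul_conjTranspose_eq,
    transpose_reMat_of_isHermitian (isHermitian_mul_conjTranspose_self Z), h.posDef_reMat,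
    h.transpose_reMat_mul_form_mul_reMat, h.inv_reMat, h.reMat_mul_form_mul,
    h.reMat_mul_form_mul_conj, h.reMat_mul_form_mul_self⟩

lemma map_ofReal_Omr (n : ℕ) : (Omr n).map Complex.ofReal = Omc n :=
  map_J (Fin n) Complex.ofRealHom

lemma inv_Omr (n : ℕ) : (Omr n)⁻¹ = -Omr n :=
  J_inv (Fin n) ℝ

lemma isNormalisedLagrangianFrame_Omr {n : ℕ} {Z : Matrix (Fin n ⊕ Fin n) (Fin n) ℂ}
    (hiso : Zᵀ * Omc n * Z = 0)
    (hnorm : Zᴴ * Omc n * Z = (2 * Complex.I) • (1 : Matrix (Fin n) (Fin n) ℂ)) :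
    IsNormalisedLagrangianFrame (Omr n) Z :=
  ⟨Fintype.card_sum, by rwa [map_ofReal_Omr], by rwa [map_ofReal_Omr]⟩

theorem stmt2 (n : ℕ) (hn : 1 ≤ n)
    (Z : Matrix (Fin n ⊕ Fin n) (Fin n) ℂ)
    (hiso : Zᵀ * Omc n * Z = 0)
    (hnorm : Zᴴ * Omc n * Z = (2 * Complex.I) • (1 : Matrix (Fin n) (Fin n) ℂ)) :
    -- (i) Im(ZZ*) = -Ω, i.e. ZZ* = Re(ZZ*) - iΩ
    (imMat (Z * Zᴴ) = -(Omr n)) ∧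
    (Z * Zᴴ = (reMat (Z * Zᴴ)).map Complex.ofReal - Complex.I • Omc n) ∧
    -- (ii) Re(ZZ*) is real symmetric, positive definite, symplectic
    ((reMat (Z * Zᴴ))ᵀ = reMat (Z * Zᴴ)) ∧
    (reMat (Z * Zᴴ)).PosDef ∧
    ((reMat (Z * Zᴴ))ᵀ * Omr n * reMat (Z * Zᴴ) = Omr n) ∧
    ((reMat (Z * Zᴴ))⁻¹ = (Omr n)ᵀ * reMat (Z * Zᴴ) * Omr n) ∧
    -- (iii) Re(ZZ*)·Ω·Z = i·Z and Re(ZZ*)·Ω·Z̄ = -i·Z̄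
    ((reMat (Z * Zᴴ)).map Complex.ofReal * Omc n * Z = Complex.I • Z) ∧
    ((reMat (Z * Zᴴ)).map Complex.ofReal * Omc n * Z.map (starRingEnd ℂ) =
      (-Complex.I) • Z.map (starRingEnd ℂ)) ∧
    -- (iv) (Re(ZZ*)·Ω)² = -I
    ((reMat (Z * Zᴴ) * Omr n) * (reMat (Z * Zᴴ) * Omr n) = -1) := by
  simpa [map_ofReal_Omr, inv_Omr, Matrix.map_neg, sub_eq_add_neg] using
    stmt2_general (isNormalisedLagrangianFrame_Omr hiso hnorm)
end
end

section
/- Let n ≥ 1 and suppose G ∈ ℝ^{2n×2n} is symmetric, positive definite and symplectic (GᵀΩG = Ω). Then there exist vectors u₁, …, uₙ, v₁, …, vₙ ∈ ℝ^{2n} forming a basis of ℝ^{2n} and real numbers λ₁, …, λₙ with λₖ ≥ 1 such that: G uₖ = λₖ uₖ and G vₖ = λₖ⁻¹ vₖ for all k = 1, …, n; and for all j, k = 1, …, n: uⱼ·uₖ = δ_{jk}, vⱼ·vₖ = δ_{jk}, vⱼ·Ωuₖ = δ_{jk}, uⱼ·Ωuₖ = 0 and vⱼ·Ωvₖ = 0.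 -/
open Matrix

noncomputable section

/-!
`Ω` is a complex structure (`Ω² = -1`) that is skew for the inner product, and `GΩG = Ω` says that
it carries `λ`-eigenvectors of `G` to `λ⁻¹`-eigenvectors. Hence, after replacing an eigenvector by
its image under `Ω` if necessary, `G` has a unit eigenvector `z` with eigenvalue at least `1`, and
the plane spanned by `z` and `Ωz` is invariant under `G` and `Ω`. So is its orthogonal complement,
and one concludes by induction on the dimension.
-/

open Module Submodule
open scoped InnerProductSpace

section InnerProductSpace

variable {E : Type*} [NormedAddCommGroup E] [InnerProductSpace ℝ E] {J T : E →ₗ[ℝ] E}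

/-- A complex structure `J` on a real inner product space that is skew-adjoint or, equivalently
given `J² = -1`, orthogonal. It abstracts the matrix `Ω`. -/
structure IsOrthogonalComplexStructure (J : E →ₗ[ℝ] E) : Prop where
  inner_map_left (x y : E) : ⟪J x, y⟫_ℝ = -⟪x, J y⟫_ℝ
  map_map (x : E) : J (J x) = -x

/-- A positive operator `T` preserving the symplectic form `(x, y) ↦ ⟪x, J y⟫`, which abstracts the
matrix `G`. As `T` is symmetric, the invariance `⟪T x, J (T y)⟫ = ⟪x, J y⟫` amounts to
`T ∘ J ∘ T = J`. Positivity means semidefiniteness here; for invertible `J` the invariance makes `T`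
injective, hence definite. -/
structure IsPositiveSymplectic (J T : E →ₗ[ℝ] E) : Prop where
  isPositive : T.IsPositive
  map_map_map (x : E) : T (J (T x)) = J x

/-- The complex line through `z` for the complex structure `J`, as a real subspace. Its orthogonal
complement is what remains after splitting off an eigenvector `z`. -/
def complexLine (J : E →ₗ[ℝ] E) (z : E) : Submodule ℝ E :=
  span ℝ {z, J z}

namespace IsOrthogonalComplexStructure

lemma inner_map_right (hJ : IsOrthogonalComplexStructure J) (x y : E) :
    ⟪x, J y⟫_ℝ = -⟪J x, y⟫_ℝ := by
  rw [hJ.inner_map_left, neg_neg]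

lemma inner_self_map (hJ : IsOrthogonalComplexStructure J) (x : E) : ⟪x, J x⟫_ℝ = 0 := by
  have := hJ.inner_map_left x x
  rw [real_inner_comm] at this
  linarith

lemma inner_map_map (hJ : IsOrthogonalComplexStructure J) (x y : E) :
    ⟪J x, J y⟫_ℝ = ⟪x, y⟫_ℝ := by
  rw [hJ.inner_map_left, hJ.map_map, inner_neg_right, neg_neg]

lemma norm_map (hJ : IsOrthogonalComplexStructure J) (x : E) : ‖J x‖ = ‖x‖ := by
  rw [norm_eq_sqrt_real_inner, hJ.inner_map_map, ← norm_eq_sqrt_real_inner]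

lemma map_ne_zero (hJ : IsOrthogonalComplexStructure J) {x : E} (hx : x ≠ 0) : J x ≠ 0 := by
  rwa [← norm_ne_zero_iff, hJ.norm_map, norm_ne_zero_iff]

lemma restrict (hJ : IsOrthogonalComplexStructure J) {W : Submodule ℝ E}
    (hW : ∀ x ∈ W, J x ∈ W) : IsOrthogonalComplexStructure (J.restrict hW) where
  inner_map_left x y := hJ.inner_map_left x y
  map_map x := Subtype.ext (hJ.map_map x)

lemma map_mem_complexLine (hJ : IsOrthogonalComplexStructure J) {z : E} :
    ∀ x ∈ complexLine J z, J x ∈ complexLine J z := by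
  suffices complexLine J z ≤ (complexLine J z).comap J from this
  refine span_le.2 (Set.pair_subset ?_ ?_)
  · exact subset_span (by simp)
  · exact mem_comap.2 (hJ.map_map z ▸ neg_mem (subset_span (by simp)))

lemma map_mem_orthogonal_complexLine (hJ : IsOrthogonalComplexStructure J) {z : E} :
    ∀ x ∈ (complexLine J z)ᗮ, J x ∈ (complexLine J z)ᗮ := by
  intro x hx y hy
  rw [hJ.inner_map_right, hx _ (hJ.map_mem_complexLine y hy), neg_zero]

lemma finrank_complexLine (hJ : IsOrthogonalComplexStructure J) {z : E} (hz : z ≠ 0) :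
    finrank ℝ (complexLine J z) = 2 := by
  have hli : LinearIndependent ℝ ![z, J z] := by
    refine linearIndependent_of_ne_zero_of_inner_eq_zero (𝕜 := ℝ) ?_ ?_
    · simp [Fin.forall_fin_two, hz, hJ.map_ne_zero hz]
    · simp [Pairwise, Fin.forall_fin_two, hJ.inner_self_map, real_inner_comm z]
  have := finrank_span_eq_card hli
  rwa [Matrix.range_cons_cons_empty, Fintype.card_fin] at this

lemma orthonormal_sumElim (hJ : IsOrthogonalComplexStructure J) {ι : Type*} {u : ι → E}
    (hu : Orthonormal ℝ u) (hiso : ∀ j k, ⟪u j, J (u k)⟫_ℝ = 0) :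
    Orthonormal ℝ (Sum.elim u (J ∘ u)) := by
  classical
  rw [orthonormal_iff_ite] at hu ⊢
  rintro (j | j) (k | k) <;> simp [hu, hiso, hJ.inner_map_map, hJ.inner_map_left]

end IsOrthogonalComplexStructure

namespace IsPositiveSymplectic

lemma smul_map_eq_of_map_eq_smul (hT : IsPositiveSymplectic J T) {x : E} {μ : ℝ}
    (hx : T x = μ • x) : μ • T (J x) = J x := by
  rw [← map_smul, ← map_smul, ← hx, hT.map_map_map]

lemma map_map_eq_inv_smul (hT : IsPositiveSymplectic J T) {x : E} {μ : ℝ} (hμ : μ ≠ 0)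
    (hx : T x = μ • x) : T (J x) = μ⁻¹ • J x :=
  (eq_inv_smul_iff₀ hμ).2 (hT.smul_map_eq_of_map_eq_smul hx)

lemma pos_of_map_eq_smul (hT : IsPositiveSymplectic J T) (hJ : IsOrthogonalComplexStructure J)
    {x : E} {μ : ℝ} (hx : x ≠ 0) (hTx : T x = μ • x) : 0 < μ := by
  have hμ0 : μ ≠ 0 := by
    rintro rfl
    exact hJ.map_ne_zero hx (by simpa using (hT.smul_map_eq_of_map_eq_smul hTx).symm)
  have hnonneg : 0 ≤ μ * ⟪x, x⟫_ℝ := by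
    simpa only [hTx, inner_smul_right] using hT.isPositive.inner_nonneg_right x
  exact (nonneg_of_mul_nonneg_left hnonneg (real_inner_self_pos.2 hx)).lt_of_ne' hμ0

lemma restrict (hT : IsPositiveSymplectic J T) {W : Submodule ℝ E} (hJW : ∀ x ∈ W, J x ∈ W)
    (hTW : ∀ x ∈ W, T x ∈ W) : IsPositiveSymplectic (J.restrict hJW) (T.restrict hTW) where
  isPositive := ⟨hT.isPositive.isSymmetric.restrict_invariant hTW, fun x ↦ hT.isPositive.2 x⟩
  map_map_map x := Subtype.ext (hT.map_map_map x)

lemma map_mem_orthogonal_complexLine (hT : IsPositiveSymplectic J T) {z : E} {μ : ℝ} (hμ : μ ≠ 0)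
    (hz : T z = μ • z) : ∀ x ∈ (complexLine J z)ᗮ, T x ∈ (complexLine J z)ᗮ := by
  have hinv : complexLine J z ≤ (complexLine J z).comap T := by
    refine span_le.2 (Set.pair_subset ?_ ?_) <;> refine mem_comap.2 ?_
    · exact hz ▸ smul_mem _ _ (subset_span (by simp))
    · exact hT.map_map_eq_inv_smul hμ hz ▸ smul_mem _ _ (subset_span (by simp))
  intro x hx y hy
  rw [← hT.isPositive.isSymmetric y x, hx _ (hinv hy)]

variable [FiniteDimensional ℝ E]

lemma exists_unit_eigenvector_one_le [Nontrivial E] (hT : IsPositiveSymplectic J T)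
    (hJ : IsOrthogonalComplexStructure J) : ∃ (z : E) (μ : ℝ), ‖z‖ = 1 ∧ 1 ≤ μ ∧ T z = μ • z := by
  have hsymm := hT.isPositive.isSymmetric
  let i : Fin (finrank ℝ E) := ⟨0, finrank_pos⟩
  let x : E := hsymm.eigenvectorBasis rfl i
  let μ : ℝ := hsymm.eigenvalues rfl i
  have hx : ‖x‖ = 1 := (hsymm.eigenvectorBasis rfl).norm_eq_one i
  have hTx : T x = μ • x := hsymm.apply_eigenvectorBasis rfl i
  have hμ : 0 < μ := hT.pos_of_map_eq_smul hJ (norm_ne_zero_iff.1 (hx ▸ one_ne_zero)) hTx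
  rcases le_total 1 μ with h | h
  · exact ⟨x, μ, hx, h, hTx⟩
  · exact ⟨J x, μ⁻¹, (hJ.norm_map x).trans hx, (one_le_inv₀ hμ).2 h,
      hT.map_map_eq_inv_smul hμ.ne' hTx⟩

theorem exists_orthonormal_eigenvectors (hT : IsPositiveSymplectic J T)
    (hJ : IsOrthogonalComplexStructure J) {n : ℕ} (hn : finrank ℝ E = 2 * n) :
    ∃ (u : Fin n → E) (lam : Fin n → ℝ), Orthonormal ℝ u ∧ (∀ j k, ⟪u j, J (u k)⟫_ℝ = 0) ∧
      (∀ k, 1 ≤ lam k) ∧ ∀ k, T (u k) = lam k • u k := by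
  induction n generalizing E with
  | zero => exact ⟨Fin.elim0, Fin.elim0, by simp⟩
  | succ n ih =>
    have : Nontrivial E := nontrivial_of_finrank_pos (R := ℝ) (by omega)
    obtain ⟨z, μ, hz, hμ, hTz⟩ := hT.exists_unit_eigenvector_one_le hJ
    let W := (complexLine J z)ᗮ
    have hW : finrank ℝ W = 2 * n := finrank_add_finrank_orthogonal' <| by
      rw [hJ.finrank_complexLine (norm_ne_zero_iff.1 (hz ▸ one_ne_zero)), hn]
      ring
    have hJW : ∀ x ∈ W, J x ∈ W := hJ.map_mem_orthogonal_complexLine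
    have hTW : ∀ x ∈ W, T x ∈ W := hT.map_mem_orthogonal_complexLine (by positivity) hTz
    obtain ⟨u, lam, hu, hiso, hlam, hTu⟩ := ih (hT.restrict hJW hTW) (hJ.restrict hJW) hW
    have hzu (k) : ⟪z, u k⟫_ℝ = 0 := (u k).2 z (subset_span (by simp))
    have hJzu (k) : ⟪J z, u k⟫_ℝ = 0 := (u k).2 (J z) (subset_span (by simp))
    have hzJu (k) : ⟪z, J (u k)⟫_ℝ = 0 := by rw [hJ.inner_map_right, hJzu, neg_zero]
    have huJz (k) : ⟪(u k : E), J z⟫_ℝ = 0 := by rw [real_inner_comm, hJzu]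
    refine ⟨vecCons z fun k ↦ u k, vecCons μ lam, ?_, ?_, ?_, ?_⟩
    · exact orthonormal_vecCons_iff.2 ⟨hz, hzu, hu.comp_linearIsometry W.subtypeₗᵢ⟩
    · simpa [Fin.forall_fin_succ, hJ.inner_self_map, hzJu, huJz] using hiso
    · simpa [Fin.forall_fin_succ, hμ] using hlam
    · simpa [Fin.forall_fin_succ, hTz, Subtype.ext_iff] using hTu

theorem exists_orthonormalBasis (hT : IsPositiveSymplectic J T)
    (hJ : IsOrthogonalComplexStructure J) {n : ℕ} (hn : finrank ℝ E = 2 * n) :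
    ∃ (b : OrthonormalBasis (Fin n ⊕ Fin n) ℝ E) (lam : Fin n → ℝ),
      (∀ k, 1 ≤ lam k) ∧ (∀ k, J (b (.inl k)) = b (.inr k)) ∧
      (∀ k, T (b (.inl k)) = lam k • b (.inl k)) ∧
      ∀ k, T (b (.inr k)) = (lam k)⁻¹ • b (.inr k) := by
  obtain ⟨u, lam, hu, hiso, hlam, hTu⟩ := hT.exists_orthonormal_eigenvectors hJ hn
  have horth := hJ.orthonormal_sumElim hu hiso
  have hspan : span ℝ (Set.range (Sum.elim u (J ∘ u))) = ⊤ :=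
    horth.linearIndependent.span_eq_top_of_card_eq_finrank' (by simp [hn, two_mul])
  have hlam0 (k) : lam k ≠ 0 := (zero_lt_one.trans_le (hlam k)).ne'
  exact ⟨.mk horth hspan.ge, lam, hlam, by simp, by simpa using hTu,
    by simpa using fun k ↦ hT.map_map_eq_inv_smul (hlam0 k) (hTu k)⟩

end IsPositiveSymplectic

end InnerProductSpace

section Matrix

variable {l : Type*} [Fintype l] [DecidableEq l]

lemma isOrthogonalComplexStructure_toEuclideanLin_J :
    IsOrthogonalComplexStructure (toEuclideanLin (J l ℝ)) where
  inner_map_left x y := by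
    rw [← LinearMap.adjoint_inner_right, ← toEuclideanLin_conjTranspose_eq_adjoint,
      conjTranspose_eq_transpose_of_trivial, J_transpose, map_neg, LinearMap.neg_apply,
      inner_neg_right]
  map_map x := by
    rw [← LinearMap.comp_apply, ← toLpLin_mul, J_squared, map_neg, toLpLin_one, LinearMap.neg_apply,
      LinearMap.id_apply]

lemma isPositiveSymplectic_toEuclideanLin {G : Matrix (l ⊕ l) (l ⊕ l) ℝ} (hpos : G.PosSemidef)
    (hsymp : G ∈ symplecticGroup l ℝ) :
    IsPositiveSymplectic (toEuclideanLin (J l ℝ)) (toEuclideanLin G) where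
  isPositive := isPositive_toEuclideanLin_iff.2 hpos
  map_map_map x := by
    have hGJG : G * (J l ℝ * G) = J l ℝ := by
      simpa only [mul_assoc, ← conjTranspose_eq_transpose_of_trivial, hpos.isHermitian.eq] using
        SymplecticGroup.mem_iff.1 hsymp
    simp only [← LinearMap.comp_apply, ← toLpLin_mul, hGJG]

end Matrix

theorem stmt3 (n : ℕ) (hn : 1 ≤ n)
    (G : Matrix (Fin n ⊕ Fin n) (Fin n ⊕ Fin n) ℝ)
    (hsymm : Gᵀ = G) (hpos : G.PosDef)
    (hsymp : Gᵀ * Omr n * G = Omr n) :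
    ∃ (u v : Fin n → (Fin n ⊕ Fin n → ℝ)) (lam : Fin n → ℝ),
      -- u₁, …, uₙ, v₁, …, vₙ form a basis of ℝ^{2n}
      LinearIndependent ℝ (Sum.elim u v) ∧
      Submodule.span ℝ (Set.range (Sum.elim u v)) = ⊤ ∧
      -- eigenvalues λₖ ≥ 1
      (∀ k, 1 ≤ lam k) ∧
      (∀ k, G *ᵥ u k = lam k • u k) ∧
      (∀ k, G *ᵥ v k = (lam k)⁻¹ • v k) ∧
      -- orthogonality relations
      (∀ j k, u j ⬝ᵥ u k = if j = k then 1 else 0) ∧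
      (∀ j k, v j ⬝ᵥ v k = if j = k then 1 else 0) ∧
      (∀ j k, v j ⬝ᵥ (Omr n *ᵥ u k) = if j = k then 1 else 0) ∧
      (∀ j k, u j ⬝ᵥ (Omr n *ᵥ u k) = 0) ∧
      (∀ j k, v j ⬝ᵥ (Omr n *ᵥ v k) = 0) := by
  have hG : G ∈ symplecticGroup (Fin n) ℝ := SymplecticGroup.mem_iff'.2 hsymp
  obtain ⟨b, lam, hlam, hJ, hGu, hGv⟩ :=
    (isPositiveSymplectic_toEuclideanLin hpos.posSemidef hG).exists_orthonormalBasis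
      isOrthogonalComplexStructure_toEuclideanLin_J (n := n) (by simp [two_mul])
  let B := b.toBasis.map (WithLp.linearEquiv 2 ℝ (Fin n ⊕ Fin n → ℝ))
  have hB : ⇑B = WithLp.ofLp ∘ b := by ext; simp [B]
  have hdot (i j) : B i ⬝ᵥ B j = if i = j then 1 else 0 := by
    rw [← orthonormal_iff_ite.1 b.orthonormal i j, hB, dotProduct_comm]
    rfl
  have hΩu (k) : Omr n *ᵥ B (.inl k) = B (.inr k) := by
    rw [hB]
    exact congrArg WithLp.ofLp (hJ k)
  have hΩv (k) : Omr n *ᵥ B (.inr k) = -B (.inl k) := by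
    rw [← hΩu, mulVec_mulVec, Omr, ← J, J_squared, neg_mulVec, one_mulVec]
  refine ⟨B ∘ .inl, B ∘ .inr, lam, ?_, ?_, hlam, ?_, ?_, ?_, ?_, ?_, ?_, ?_⟩
  · exact (Sum.elim_comp_inl_inr B).symm ▸ B.linearIndependent
  · exact (Sum.elim_comp_inl_inr B).symm ▸ B.span_eq
  · exact fun k ↦ hB ▸ congrArg WithLp.ofLp (hGu k)
  · exact fun k ↦ hB ▸ congrArg WithLp.ofLp (hGv k)
  all_goals simp [hdot, hΩu, hΩv]
end
end

section
/- Let n ≥ 1 and let G ∈ ℝ^{2n×2n} be symmetric, positive definite and symplectic. Let u₁, …, uₙ, v₁, …, vₙ ∈ ℝ^{2n} and λ₁, …, λₙ ≥ 1 satisfy: G uₖ = λₖ uₖ, G vₖ = λₖ⁻¹ vₖ, and for all j, k: uⱼ·uₖ = δ_{jk}, vⱼ·vₖ = δ_{jk}, vⱼ·Ωuₖ = δ_{jk}, uⱼ·Ωuₖ = 0, vⱼ·Ωvₖ = 0. Define lₖ := λₖ^{−1/2} uₖ − i λₖ^{1/2} vₖ ∈ ℂ^{2n} for k = 1, …, n,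 and let Z ∈ ℂ^{2n×n} be the matrix with columns l₁, …, lₙ. Then Z is a normalised Lagrangian frame (ZᵀΩZ = 0 and Z*ΩZ = 2i·Iₙ), Re(ZZ*) = G⁻¹, and G = Ωᵀ Re(ZZ*) Ω. -/
open Matrix

noncomputable section

/-! Since `v k` and `Ω (u k)` are unit vectors with inner product `1`, they coincide. So the matrix
`U` with columns `u, v` is orthogonal and commutes with `Ω`; in particular it is symplectic, and so
is `S = U * diag(λ^{-1/2}, λ^{1/2})`. Now `Z = S * W`, where `W` is `1` stacked over `-i`, and both
frame identities reduce to those of `W`. Moreover `Re (Z Z*) = S Sᵀ = U diag(λ⁻¹, λ) Uᵀ` inverts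
`G`, and the inverse of the symplectic matrix `S Sᵀ` is `Ωᵀ (S Sᵀ) Ω`. -/

theorem eq_of_dotProduct_eq_one {m R : Type*} [Fintype m] [CommRing R] [LinearOrder R]
    [IsStrictOrderedRing R] {x y : m → R} (hx : x ⬝ᵥ x = 1) (hy : y ⬝ᵥ y = 1)
    (hxy : x ⬝ᵥ y = 1) : x = y := by
  refine sub_eq_zero.mp (dotProduct_self_eq_zero.mp ?_)
  simp [sub_dotProduct, dotProduct_sub, dotProduct_comm y x, hx, hy, hxy]

section Diagonalization

variable {m k R : Type*} [Fintype m] [Fintype k] [DecidableEq k] [CommSemiring R]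

theorem mul_transpose_of_eq_mul_diagonal {G : Matrix m m R} {w : k → m → R} {d : k → R}
    (hw : ∀ j, G *ᵥ w j = d j • w j) : G * (of w)ᵀ = (of w)ᵀ * diagonal d := by
  ext i j
  rw [mul_diagonal, mul_comm]
  exact congrFun (hw j) i

theorem mul_mul_transpose_eq_one_of_mul_eq_mul_diagonal [DecidableEq m]
    {G : Matrix m m R} {U : Matrix m k R} {d c : k → R} (hU : U * Uᵀ = 1)
    (hG : G * U = U * diagonal d) (hdc : ∀ i, d i * c i ^ 2 = 1) :
    G * (U * diagonal c * (U * diagonal c)ᵀ) = 1 := by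
  have hd : diagonal d * (diagonal c * diagonal c) = (1 : Matrix k k R) := by
    simp only [diagonal_mul_diagonal, ← pow_two (c _), hdc, diagonal_one]
  calc G * (U * diagonal c * (U * diagonal c)ᵀ)
      = G * U * (diagonal c * diagonal c) * Uᵀ := by
        simp only [transpose_mul, diagonal_transpose, Matrix.mul_assoc]
    _ = U * (diagonal d * (diagonal c * diagonal c)) * Uᵀ := by
        rw [hG, Matrix.mul_assoc U]
    _ = 1 := by rw [hd, Matrix.mul_one, hU]

end Diagonalization

section Symplectic

variable {l R : Type*} [Fintype l] [DecidableEq l] [CommRing R]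

theorem inv_mul_transpose_self_of_mem_symplecticGroup {S : Matrix (l ⊕ l) (l ⊕ l) R}
    (hS : S ∈ symplecticGroup l R) : (S * Sᵀ)⁻¹ = (J l R)ᵀ * (S * Sᵀ) * J l R := by
  rw [SymplecticGroup.inv_eq_symplectic_inv _ (mul_mem hS (SymplecticGroup.transpose_mem hS)),
    transpose_mul, transpose_transpose, J_transpose]

theorem mem_symplecticGroup_of_commute_J {U : Matrix (l ⊕ l) (l ⊕ l) R} (hU : Uᵀ * U = 1)
    (hJ : Commute (J l R) U) : U ∈ symplecticGroup l R := by
  rw [SymplecticGroup.mem_iff', Matrix.mul_assoc, hJ.eq, ← Matrix.mul_assoc, hU, Matrix.one_mul]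

theorem J_mulVec_dotProduct_J_mulVec (x y : l ⊕ l → R) :
    (J l R *ᵥ x) ⬝ᵥ (J l R *ᵥ y) = x ⬝ᵥ y := by
  rw [dotProduct_mulVec, vecMul_mulVec, J_transpose, Matrix.neg_mul, J_squared, neg_neg,
    vecMul_one]

/-- The completion of an orthonormal basis `u` of a Lagrangian subspace to a symplectic basis, as
the matrix whose columns are the `u k` followed by the `Ω (u k)`. It is defined for every family
`u` of the right size. -/
def symplecticCompletion (u : l → l ⊕ l → R) : Matrix (l ⊕ l) (l ⊕ l) R :=
  (of (Sum.elim u fun k => J l R *ᵥ u k))ᵀ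

theorem symplecticCompletion_eq_fromCols (u : l → l ⊕ l → R) :
    symplecticCompletion u = fromCols (of u)ᵀ (J l R * (of u)ᵀ) := by
  ext i (k | k) <;> rfl

theorem commute_J_symplecticCompletion (u : l → l ⊕ l → R) :
    Commute (J l R) (symplecticCompletion u) := by
  have hUJ : fromCols (of u)ᵀ (J l R * (of u)ᵀ) * J l R =
      fromCols (J l R * (of u)ᵀ) (-(of u)ᵀ) := by
    simp [J, fromCols_mul_fromBlocks]
  rw [symplecticCompletion_eq_fromCols, Commute, SemiconjBy, hUJ, mul_fromCols,
    ← Matrix.mul_assoc, J_squared, Matrix.neg_mul, Matrix.one_mul]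

theorem transpose_mul_self_symplecticCompletion {u : l → l ⊕ l → R}
    (huu : ∀ j k, u j ⬝ᵥ u k = if j = k then 1 else 0)
    (huJu : ∀ j k, u j ⬝ᵥ (J l R *ᵥ u k) = 0) :
    (symplecticCompletion u)ᵀ * symplecticCompletion u = 1 := by
  ext (j | j) (k | k)
  · exact (huu j k).trans (by simp [one_apply])
  · exact huJu j k
  · exact (dotProduct_comm _ _).trans (huJu k j)
  · exact (J_mulVec_dotProduct_J_mulVec (u j) (u k)).trans ((huu j k).trans (by simp [one_apply]))

theorem diagonal_sumElim_inv_mem_symplecticGroup {K : Type*} [Field K] {s : l → K}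
    (hs : ∀ k, s k ≠ 0) : diagonal (Sum.elim s⁻¹ s) ∈ symplecticGroup l K := by
  rw [← fromBlocks_diagonal, SymplecticGroup.fromBlocks_mem_iff]
  simp [hs]

end Symplectic

section LagrangianFrame

variable {m l : Type*} [Fintype l] [DecidableEq l]

/-- Normalised Lagrangian frames: the columns of `Z` span a Lagrangian subspace of `ℂ^{2l}` and are
orthogonal for the Hermitian form `(x, y) ↦ x* Ω y / 2i`, each of unit length. The matrix `Ω` is
Mathlib's `Matrix.J`. -/
structure IsNormalisedLagrangianFrame_s4 (Z : Matrix (l ⊕ l) l ℂ) : Prop where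
  transpose_mul_J_mul : Zᵀ * J l ℂ * Z = 0
  conjTranspose_mul_J_mul : Zᴴ * J l ℂ * Z = (2 * Complex.I) • (1 : Matrix l l ℂ)

variable (l) in
/-- The model frame: the identity matrix stacked over `-i` times the identity matrix. -/
def standardFrame : Matrix (l ⊕ l) l ℂ :=
  fromRows 1 (-Complex.I • 1)

theorem isNormalisedLagrangianFrame_standardFrame :
    IsNormalisedLagrangianFrame_s4 (standardFrame l) where
  transpose_mul_J_mul := by
    simp [standardFrame, J, transpose_fromRows, fromCols_mul_fromBlocks, fromCols_mul_fromRows]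
  conjTranspose_mul_J_mul := by
    simp [standardFrame, J, conjTranspose_fromRows_eq_fromCols_conjTranspose,
      fromCols_mul_fromBlocks, fromCols_mul_fromRows, two_mul, add_smul]

theorem IsNormalisedLagrangianFrame_s4.map_ofReal_mul {S : Matrix (l ⊕ l) (l ⊕ l) ℝ}
    {Z : Matrix (l ⊕ l) l ℂ} (hZ : IsNormalisedLagrangianFrame_s4 Z) (hS : S ∈ symplecticGroup l ℝ) :
    IsNormalisedLagrangianFrame_s4 (S.map Complex.ofReal * Z) := by
  set T := S.map Complex.ofReal
  have hTJ : Tᵀ * J l ℂ * T = J l ℂ :=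
    SymplecticGroup.mem_iff'.mp (SymplecticGroup.map_mem hS Complex.ofRealHom)
  have hT : Tᴴ = Tᵀ := by
    ext
    simp [T]
  constructor
  · calc (T * Z)ᵀ * J l ℂ * (T * Z)
        = Zᵀ * (Tᵀ * J l ℂ * T) * Z := by simp only [transpose_mul, Matrix.mul_assoc]
      _ = 0 := by rw [hTJ, hZ.transpose_mul_J_mul]
  · calc (T * Z)ᴴ * J l ℂ * (T * Z)
        = Zᴴ * (Tᵀ * J l ℂ * T) * Z := by simp only [conjTranspose_mul, hT, Matrix.mul_assoc]
      _ = (2 * Complex.I) • 1 := by rw [hTJ, hZ.conjTranspose_mul_J_mul]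

theorem map_ofReal_mul_standardFrame_apply (S : Matrix m (l ⊕ l) ℝ) (i : m) (k : l) :
    (S.map Complex.ofReal * standardFrame l) i k =
      S i (Sum.inl k) - Complex.I * S i (Sum.inr k) := by
  simp [standardFrame, mul_apply, one_apply, sub_eq_add_neg, mul_comm]

theorem reMat_map_ofReal_mul_standardFrame_mul_conjTranspose (S : Matrix m (l ⊕ l) ℝ) :
    reMat (S.map Complex.ofReal * standardFrame l *
      (S.map Complex.ofReal * standardFrame l)ᴴ) = S * Sᵀ := by
  ext i j
  rw [reMat, of_apply, mul_apply, mul_apply, Fintype.sum_sum_type, ← Finset.sum_add_distrib,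
    Complex.re_sum]
  simp [map_ofReal_mul_standardFrame_apply]

end LagrangianFrame

theorem stmt4_general {l : Type*} [Fintype l] [DecidableEq l]
    (G : Matrix (l ⊕ l) (l ⊕ l) ℝ) (u v : l → (l ⊕ l → ℝ)) (lam : l → ℝ)
    (hlam : ∀ k, 0 < lam k)
    (hGu : ∀ k, G *ᵥ u k = lam k • u k)
    (hGv : ∀ k, G *ᵥ v k = (lam k)⁻¹ • v k)
    (huu : ∀ j k, u j ⬝ᵥ u k = if j = k then 1 else 0)
    (hvv : ∀ k, v k ⬝ᵥ v k = 1)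
    (hvJu : ∀ k, v k ⬝ᵥ (J l ℝ *ᵥ u k) = 1)
    (huJu : ∀ j k, u j ⬝ᵥ (J l ℝ *ᵥ u k) = 0) :
    let Z : Matrix (l ⊕ l) l ℂ := of fun i k =>
      ((Real.sqrt (lam k))⁻¹ * u k i : ℝ) - Complex.I * ((Real.sqrt (lam k) * v k i : ℝ) : ℂ)
    IsNormalisedLagrangianFrame_s4 Z ∧ reMat (Z * Zᴴ) = G⁻¹ ∧
      G = (J l ℝ)ᵀ * reMat (Z * Zᴴ) * J l ℝ := by
  obtain rfl : v = fun k => J l ℝ *ᵥ u k := funext fun k =>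
    eq_of_dotProduct_eq_one (hvv k) (by simp [J_mulVec_dotProduct_J_mulVec, huu]) (hvJu k)
  intro Z
  have hs : ∀ k, √(lam k) ≠ 0 := fun k => (Real.sqrt_pos.mpr (hlam k)).ne'
  let s : l → ℝ := fun k => √(lam k)
  let U := symplecticCompletion u
  let S := U * diagonal (Sum.elim s⁻¹ s)
  have hU : Uᵀ * U = 1 := transpose_mul_self_symplecticCompletion huu huJu
  have hS : S ∈ symplecticGroup l ℝ :=
    mul_mem (mem_symplecticGroup_of_commute_J hU (commute_J_symplecticCompletion u))
      (diagonal_sumElim_inv_mem_symplecticGroup hs)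
  have hGU : G * U = U * diagonal (Sum.elim lam lam⁻¹) :=
    mul_transpose_of_eq_mul_diagonal (Sum.rec hGu hGv)
  have hGS : G * (S * Sᵀ) = 1 := by
    refine mul_mul_transpose_eq_one_of_mul_eq_mul_diagonal (mul_eq_one_comm.mp hU) hGU ?_
    rintro (k | k) <;> simp [s, Real.sq_sqrt (hlam k).le, (hlam k).ne']
  have hZ : Z = S.map Complex.ofReal * standardFrame l := by
    ext i k
    simp [Z, S, U, s, symplecticCompletion, mul_comm, map_ofReal_mul_standardFrame_apply]
  rw [hZ, reMat_map_ofReal_mul_standardFrame_mul_conjTranspose,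
    ← inv_mul_transpose_self_of_mem_symplecticGroup hS]
  exact ⟨isNormalisedLagrangianFrame_standardFrame.map_ofReal_mul hS,
    (inv_eq_right_inv hGS).symm, (inv_eq_left_inv hGS).symm⟩

theorem stmt4 (n : ℕ) (hn : 1 ≤ n)
    (G : Matrix (Fin n ⊕ Fin n) (Fin n ⊕ Fin n) ℝ)
    (hsymm : Gᵀ = G) (hpos : G.PosDef)
    (hsymp : Gᵀ * Omr n * G = Omr n)
    (u v : Fin n → (Fin n ⊕ Fin n → ℝ)) (lam : Fin n → ℝ)
    (hlam : ∀ k, 1 ≤ lam k)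
    (hGu : ∀ k, G *ᵥ u k = lam k • u k)
    (hGv : ∀ k, G *ᵥ v k = (lam k)⁻¹ • v k)
    (huu : ∀ j k, u j ⬝ᵥ u k = if j = k then 1 else 0)
    (hvv : ∀ j k, v j ⬝ᵥ v k = if j = k then 1 else 0)
    (hvOu : ∀ j k, v j ⬝ᵥ (Omr n *ᵥ u k) = if j = k then 1 else 0)
    (huOu : ∀ j k, u j ⬝ᵥ (Omr n *ᵥ u k) = 0)
    (hvOv : ∀ j k, v j ⬝ᵥ (Omr n *ᵥ v k) = 0) :
    -- Z has columns lₖ = λₖ^{-1/2} uₖ - i λₖ^{1/2} vₖ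
    let Z : Matrix (Fin n ⊕ Fin n) (Fin n) ℂ :=
      Matrix.of fun i k =>
        ((Real.sqrt (lam k))⁻¹ * u k i : ℝ) - Complex.I * ((Real.sqrt (lam k) * v k i : ℝ) : ℂ)
    -- Z is a normalised Lagrangian frame
    (Zᵀ * Omc n * Z = 0) ∧
    (Zᴴ * Omc n * Z = (2 * Complex.I) • (1 : Matrix (Fin n) (Fin n) ℂ)) ∧
    -- Re(ZZ*) = G⁻¹ and G = Ωᵀ Re(ZZ*) Ω
    (reMat (Z * Zᴴ) = G⁻¹) ∧
    (G = (Omr n)ᵀ * reMat (Z * Zᴴ) * Omr n) := by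
  -- `Omr n` and `Omc n` are definitionally `J (Fin n) ℝ` and `J (Fin n) ℂ`.
  obtain ⟨hZ, hinv, hG⟩ := stmt4_general G u v lam (fun k => one_pos.trans_le (hlam k)) hGu hGv huu
    (fun k => by simp [hvv]) (fun k => (hvOu k k).trans (if_pos rfl)) huOu
  exact ⟨hZ.transpose_mul_J_mul, hZ.conjTranspose_mul_J_mul, hinv, hG⟩
end
end

section
/- Let n ≥ 1 and let Z₀, Z₁ ∈ ℂ^{2n×n} both satisfy ZᵀΩZ = 0 and Z*ΩZ = 2i·Iₙ, and suppose range Z₀ = range Z₁ as subspaces of ℂ^{2n}. Then there exists a unitary matrix C ∈ ℂ^{n×n} (C*C = Iₙ) such that Z₁ = Z₀ C. -/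
open Matrix

noncomputable section

lemma range_mulVec_subset_iff_exists_mul {m k l R : Type*} [Fintype k] [Fintype l] [Semiring R]
    {A : Matrix m k R} {B : Matrix m l R} :
    Set.range B.mulVec ⊆ Set.range A.mulVec ↔ ∃ C : Matrix k l R, B = A * C := by
  classical
  constructor
  · intro h
    have hcol (j : l) : ∃ c, A *ᵥ c = B.col j := by
      simpa only [mulVec_single_one, Set.mem_range] using h ⟨Pi.single j 1, rfl⟩
    choose c hc using hcol
    exact ⟨(of c)ᵀ, ext_col fun j => (hc j).symm⟩
  · rintro ⟨C, rfl⟩ _ ⟨v, rfl⟩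
    exact ⟨C *ᵥ v, mulVec_mulVec v A C⟩

lemma conjTranspose_mul_mul_mul_self {m k l R : Type*} [Fintype m] [Fintype k]
    [NonUnitalSemiring R] [StarRing R] (J : Matrix m m R) (Z : Matrix m k R) (C : Matrix k l R) :
    (Z * C)ᴴ * J * (Z * C) = Cᴴ * (Zᴴ * J * Z) * C := by
  simp only [conjTranspose_mul, Matrix.mul_assoc]

theorem stmt6_general {m k l R : Type*} [Fintype m] [Fintype k] [Fintype l]
    [DecidableEq k] [DecidableEq l] [CommSemiring R] [StarRing R]
    (J : Matrix m m R) {a : R} (ha : IsLeftRegular a)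
    (Z₀ : Matrix m k R) (Z₁ : Matrix m l R)
    (h₀ : Z₀ᴴ * J * Z₀ = a • (1 : Matrix k k R)) (h₁ : Z₁ᴴ * J * Z₁ = a • (1 : Matrix l l R))
    (hrange : Set.range Z₁.mulVec ⊆ Set.range Z₀.mulVec) :
    ∃ C : Matrix k l R, Cᴴ * C = 1 ∧ Z₁ = Z₀ * C := by
  obtain ⟨C, rfl⟩ := range_mulVec_subset_iff_exists_mul.mp hrange
  have hgram : a • (Cᴴ * C) = a • (1 : Matrix l l R) :=
    calc
      a • (Cᴴ * C) = Cᴴ * (a • (1 : Matrix k k R)) * C := by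
        rw [Matrix.mul_smul, Matrix.mul_one, Matrix.smul_mul]
      _ = Cᴴ * (Z₀ᴴ * J * Z₀) * C := by rw [h₀]
      _ = (Z₀ * C)ᴴ * J * (Z₀ * C) := (conjTranspose_mul_mul_mul_self J Z₀ C).symm
      _ = a • (1 : Matrix l l R) := h₁
  exact ⟨C, ha.isSMulRegular.matrix hgram, rfl⟩

theorem stmt6 (n : ℕ) (hn : 1 ≤ n)
    (Z₀ Z₁ : Matrix (Fin n ⊕ Fin n) (Fin n) ℂ)
    (h₀iso : Z₀ᵀ * Omc n * Z₀ = 0)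
    (h₀norm : Z₀ᴴ * Omc n * Z₀ = (2 * Complex.I) • (1 : Matrix (Fin n) (Fin n) ℂ))
    (h₁iso : Z₁ᵀ * Omc n * Z₁ = 0)
    (h₁norm : Z₁ᴴ * Omc n * Z₁ = (2 * Complex.I) • (1 : Matrix (Fin n) (Fin n) ℂ))
    (hrange : Set.range Z₀.mulVec = Set.range Z₁.mulVec) :
    ∃ C : Matrix (Fin n) (Fin n) ℂ, Cᴴ * C = 1 ∧ Z₁ = Z₀ * C :=
  stmt6_general (Omc n) (IsRegular.of_ne_zero (by simp)).left
    Z₀ Z₁ h₀norm h₁norm hrange.ge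
end
end

section
/- Let n ≥ 1, ε > 0 and let B ∈ ℂ^{n×n} be symmetric (B = Bᵀ). A smooth function φ : ℝⁿ → ℂ satisfies A((Bq, q))φ = 0 for every q ∈ ℂⁿ if and only if there exists a constant c ∈ ℂ such that φ(x) = c·exp((i/(2ε))·x·Bx) for all x ∈ ℝⁿ. -/
open Matrix

noncomputable section

/-- The lowering operator `A(l)` with parameter `l = (l_p, l_q) ∈ ℂⁿ × ℂⁿ`, acting on
functions `f : ℝⁿ → ℂ` by
`(A(l)f)(x) = (i/√(2ε)) ( l_q·(−iε ∇f(x)) − (l_p·x) f(x) )`. -/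
def lowerOp (n : ℕ) (ε : ℝ) (l : (Fin n → ℂ) × (Fin n → ℂ))
    (f : (Fin n → ℝ) → ℂ) : (Fin n → ℝ) → ℂ := fun x =>
  (Complex.I / (Real.sqrt (2 * ε) : ℂ)) *
    ((∑ j, l.2 j * (-(Complex.I * (ε : ℂ)) * fderiv ℝ f x (Pi.single j 1))) -
      (∑ j, l.1 j * (x j : ℂ)) * f x)

/-! The operator `A(l)` annihilates `φ` at `x` exactly when `l_q · ∇φ(x) = (i/ε) (l_p · x) φ(x)`.
Letting `l = (Bq, q)` with `q` arbitrary turns this into `∇φ(x) = (i/ε) φ(x) Bᵀx`, and for symmetric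
`B` the right-hand side is `φ(x)` times the gradient of `g(x) = (i/(2ε)) x·Bx`. The equation
`Dφ = φ Dg` says that `φ e^{-g}` has zero derivative, so it is constant. -/

section LogarithmicDerivative

variable {𝕜 E : Type*} [RCLike 𝕜] [NormedAlgebra 𝕜 ℂ] [NormedAddCommGroup E] [NormedSpace 𝕜 E]
  {f g : E → ℂ}

theorem fderiv_const_mul_cexp (hg : Differentiable 𝕜 g) (c : ℂ) (x : E) :
    fderiv 𝕜 (fun y => c * Complex.exp (g y)) x = (c * Complex.exp (g x)) • fderiv 𝕜 g x := by
  rw [((hg x).hasFDerivAt.cexp.const_mul c).fderiv, smul_smul]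

theorem fderiv_mul_cexp_neg_eq_zero (hf : Differentiable 𝕜 f) (hg : Differentiable 𝕜 g) {x : E}
    (h : fderiv 𝕜 f x = f x • fderiv 𝕜 g x) :
    fderiv 𝕜 (fun y => f y * Complex.exp (-g y)) x = 0 := by
  rw [((hf x).hasFDerivAt.fun_mul (hg x).hasFDerivAt.fun_neg.cexp).fderiv, h]
  module

theorem forall_fderiv_eq_smul_fderiv_iff_exists_const_mul_cexp
    (hf : Differentiable 𝕜 f) (hg : Differentiable 𝕜 g) :
    (∀ x, fderiv 𝕜 f x = f x • fderiv 𝕜 g x) ↔ ∃ c : ℂ, ∀ x, f x = c * Complex.exp (g x) := by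
  constructor
  · intro h
    refine ⟨f 0 * Complex.exp (-g 0), fun x => ?_⟩
    have hconst : f x * Complex.exp (-g x) = f 0 * Complex.exp (-g 0) :=
      is_const_of_fderiv_eq_zero (hf.mul hg.neg.cexp)
        (fun y => fderiv_mul_cexp_neg_eq_zero hf hg (h y)) x 0
    rw [← hconst, mul_assoc, ← Complex.exp_add, neg_add_cancel, Complex.exp_zero, mul_one]
  · rintro ⟨c, hc⟩ x
    rw [funext hc, fderiv_const_mul_cexp hg]

end LogarithmicDerivative

theorem hasFDerivAt_bilinear_self {𝕜 E F : Type*} [NontriviallyNormedField 𝕜] [CompleteSpace 𝕜]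
    [NormedAddCommGroup E] [NormedSpace 𝕜 E] [FiniteDimensional 𝕜 E]
    [NormedAddCommGroup F] [NormedSpace 𝕜 F] (β : E →ₗ[𝕜] E →ₗ[𝕜] F) (x : E) :
    HasFDerivAt (fun y => β y y) (LinearMap.toContinuousLinearMap (β x + β.flip x)) x := by
  have h : HasFDerivAt (fun y => β y y) _ x :=
    β.toContinuousBilinearMap.hasFDerivAt_of_bilinear (hasFDerivAt_id x) (hasFDerivAt_id x)
  exact h.congr_fderiv (by ext v; simp)

section PartialDerivatives

variable {ι : Type*} [DecidableEq ι]

/-- The gradient `∇f(x)` appearing in `lowerOp`, as a vector in `ℂ^ι` (Mathlib's `gradient` would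
need a scalar-valued function on an inner product space over the same field). -/
def partialDerivs (f : (ι → ℝ) → ℂ) (x : ι → ℝ) : ι → ℂ := fun j => fderiv ℝ f x (Pi.single j 1)

theorem fderiv_eq_smul_iff_partialDerivs_eq_smul [Finite ι] {f g : (ι → ℝ) → ℂ}
    {x : ι → ℝ} {a : ℂ} :
    fderiv ℝ f x = a • fderiv ℝ g x ↔ partialDerivs f x = a • partialDerivs g x := by
  refine ⟨fun h => funext fun j => DFunLike.congr_fun h (Pi.single j 1), fun h => ?_⟩
  refine ContinuousLinearMap.coe_injective ((Pi.basisFun ℝ ι).ext fun j => ?_)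
  simpa [partialDerivs] using congrFun h j

end PartialDerivatives

section QuadraticForm

variable {ι : Type*} [Fintype ι]

/-- The quadratic form `x·Bx` in the exponent of the Gaussian, restricted to real vectors `x`; the
complex matrix `B` acts without conjugation. -/
def quadForm (B : Matrix ι ι ℂ) (x : ι → ℝ) : ℂ :=
  (fun j => (x j : ℂ)) ⬝ᵥ (B *ᵥ fun j => (x j : ℂ))

theorem quadForm_eq_toLinearMap₂' [DecidableEq ι] (B : Matrix ι ι ℂ) (x : ι → ℝ) :
    quadForm B x = Matrix.toLinearMap₂' ℝ B x x := by
  simp [quadForm, Matrix.toLinearMap₂'_apply, dotProduct, mulVec, Finset.mul_sum, mul_comm]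

theorem hasFDerivAt_quadForm [DecidableEq ι] (B : Matrix ι ι ℂ) (x : ι → ℝ) :
    HasFDerivAt (quadForm B) (LinearMap.toContinuousLinearMap
      (Matrix.toLinearMap₂' ℝ B x + (Matrix.toLinearMap₂' ℝ B).flip x)) x := by
  rw [funext (quadForm_eq_toLinearMap₂' B)]
  exact hasFDerivAt_bilinear_self _ x

theorem differentiable_quadForm (B : Matrix ι ι ℂ) : Differentiable ℝ (quadForm B) := by
  classical exact fun x => (hasFDerivAt_quadForm B x).differentiableAt

theorem partialDerivs_quadForm [DecidableEq ι] (B : Matrix ι ι ℂ) (x : ι → ℝ) :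
    partialDerivs (quadForm B) x = (B + Bᵀ) *ᵥ fun j => (x j : ℂ) := by
  ext j
  rw [partialDerivs, (hasFDerivAt_quadForm B x).fderiv, add_mulVec, add_comm]
  simp [Matrix.toLinearMap₂'_apply, Pi.single_apply, mulVec, dotProduct, mul_comm]

end QuadraticForm

section LoweringOperator

variable {n : ℕ} {ε : ℝ} {f : (Fin n → ℝ) → ℂ} {x : Fin n → ℝ}

theorem lowerOp_eq_zero_iff (hε : 0 < ε) {l : (Fin n → ℂ) × (Fin n → ℂ)} :
    lowerOp n ε l f x = 0 ↔
      l.2 ⬝ᵥ partialDerivs f x = Complex.I / ε * (l.1 ⬝ᵥ fun j => (x j : ℂ)) * f x := by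
  have hε' : (ε : ℂ) ≠ 0 := by exact_mod_cast hε.ne'
  have hprefactor : Complex.I / (Real.sqrt (2 * ε) : ℂ) ≠ 0 :=
    div_ne_zero Complex.I_ne_zero (by exact_mod_cast (Real.sqrt_pos.2 (by positivity)).ne')
  have hscale : Complex.I / ε * -(Complex.I * ε) = 1 := by
    field_simp
    simp
  have hsum : ∑ j, l.2 j * (-(Complex.I * ε) * fderiv ℝ f x (Pi.single j 1)) =
      -(Complex.I * ε) * (l.2 ⬝ᵥ partialDerivs f x) := by
    simp only [dotProduct, partialDerivs, Finset.mul_sum, mul_left_comm]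
  calc lowerOp n ε l f x = 0
    _ ↔ -(Complex.I * ε) * (l.2 ⬝ᵥ partialDerivs f x) =
          (l.1 ⬝ᵥ fun j => (x j : ℂ)) * f x := by
      rw [lowerOp, mul_eq_zero, or_iff_right hprefactor, sub_eq_zero, hsum, dotProduct.eq_def l.1]
    _ ↔ _ := by
      rw [← mul_right_inj' (div_ne_zero Complex.I_ne_zero hε'), ← mul_assoc, hscale, one_mul,
        mul_assoc]

theorem forall_lowerOp_mulVec_eq_zero_iff (hε : 0 < ε) {B : Matrix (Fin n) (Fin n) ℂ} :
    (∀ q, lowerOp n ε (B *ᵥ q, q) f x = 0) ↔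
      partialDerivs f x = (Complex.I / ε * f x) • (Bᵀ *ᵥ fun j => (x j : ℂ)) := by
  rw [← dotProduct_eq_iff]
  refine forall_congr' fun q => ?_
  have htranspose : (B *ᵥ q) ⬝ᵥ (fun j => (x j : ℂ)) = (Bᵀ *ᵥ fun j => (x j : ℂ)) ⬝ᵥ q := by
    rw [mulVec_transpose, ← dotProduct_mulVec, dotProduct_comm]
  rw [lowerOp_eq_zero_iff hε, htranspose, dotProduct_comm, smul_dotProduct, smul_eq_mul,
    mul_right_comm]

theorem forall_lowerOp_mulVec_eq_zero_iff_fderiv_eq (hε : 0 < ε) {B : Matrix (Fin n) (Fin n) ℂ}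
    (hB : B.IsSymm) :
    (∀ q, lowerOp n ε (B *ᵥ q, q) f x = 0) ↔
      fderiv ℝ f x = f x • fderiv ℝ (fun y => Complex.I / (2 * ε) * quadForm B y) x := by
  have hcoeff : f x * (Complex.I / (2 * ε)) * 2 = Complex.I / ε * f x := by ring
  rw [forall_lowerOp_mulVec_eq_zero_iff hε, fderiv_const_mul (differentiable_quadForm B x),
    smul_smul, fderiv_eq_smul_iff_partialDerivs_eq_smul, partialDerivs_quadForm, hB.eq,
    ← two_smul ℂ B, smul_mulVec, smul_smul, hcoeff]

end LoweringOperator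

theorem stmt8_general (n : ℕ) (ε : ℝ) (hε : 0 < ε)
    (B : Matrix (Fin n) (Fin n) ℂ) (hB : B = Bᵀ)
    (φ : (Fin n → ℝ) → ℂ) (hφ : Differentiable ℝ φ) :
    (∀ q : Fin n → ℂ, ∀ x, lowerOp n ε (B *ᵥ q, q) φ x = 0) ↔
      ∃ c : ℂ, ∀ x : Fin n → ℝ,
        φ x = c * Complex.exp ((Complex.I / (2 * ε)) *
          ((fun j => (x j : ℂ)) ⬝ᵥ (B *ᵥ fun j => (x j : ℂ)))) := by
  rw [forall_comm]
  simp only [forall_lowerOp_mulVec_eq_zero_iff_fderiv_eq hε hB.symm]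
  exact forall_fderiv_eq_smul_fderiv_iff_exists_const_mul_cexp hφ
    ((differentiable_quadForm B).const_mul _)

theorem stmt8 (n : ℕ) (hn : 1 ≤ n) (ε : ℝ) (hε : 0 < ε)
    (B : Matrix (Fin n) (Fin n) ℂ) (hB : B = Bᵀ)
    (φ : (Fin n → ℝ) → ℂ) (hφ : ContDiff ℝ (⊤ : ℕ∞) φ) :
    (∀ q : Fin n → ℂ, ∀ x, lowerOp n ε (B *ᵥ q, q) φ x = 0) ↔
      ∃ c : ℂ, ∀ x : Fin n → ℝ,
        φ x = c * Complex.exp ((Complex.I / (2 * ε)) *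
          ((fun j => (x j : ℂ)) ⬝ᵥ (B *ᵥ fun j => (x j : ℂ)))) :=
  stmt8_general n ε hε B hB φ (hφ.differentiable (by simp))
end
end

section
/- Let n ≥ 1, ε > 0 and let B ∈ ℂ^{n×n} be symmetric. The Gaussian function g : ℝⁿ → ℂ, g(x) = exp((i/(2ε))·x·Bx), is square-integrable on ℝⁿ (i.e. ∫_{ℝⁿ} |g(x)|² dx < ∞) if and only if Im B is positive definite. -/
open Matrix MeasureTheory

noncomputable section

/-!
Since `|g x|² = exp (-Q x / ε)` with `Q x = x · (Im B) x`, the claim is that a real Gaussian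
`exp (-c Q)` is integrable exactly when `Q` is positive definite. If it is, compactness of the unit
sphere gives `Q x ≥ C ‖x‖²` with `C > 0`. If instead `Q v ≤ 0` for some `v ≠ 0`, the parallelogram
law `Q (x + t v) + Q (x - t v) = 2 Q x + 2 t² Q v` shows that for each `x` with `Q x ≤ 1` and each
`t` one of `x ± t v` lies in `{Q ≤ 1}`. So, however far a bounded neighbourhood `U` of `0` in
`{Q ≤ 1}` is moved by `± t v`, the two translates meet `{Q ≤ 1}` in total measure at least that of
`U`. A set of finite measure has almost all of its mass in a compact set, so `{Q ≤ 1}` has infinite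
measure, whereas `exp (-c Q) ≥ exp (-c)` on it.
-/

open Bornology Metric
open scoped ENNReal

variable {E : Type*} [NormedAddCommGroup E] [NormedSpace ℝ E]

theorem exists_smul_notMem_of_isBounded {S : Set E} (hS : IsBounded S) {v : E} (hv : v ≠ 0) :
    ∃ t : ℝ, t • v ∉ S := by
  obtain ⟨R, hR⟩ := hS.exists_norm_le
  obtain ⟨t, ht⟩ := NormedSpace.exists_lt_norm ℝ ℝ (R / ‖v‖)
  refine ⟨t, fun h ↦ (hR _ h).not_gt ?_⟩
  rwa [norm_smul, ← div_lt_iff₀ (norm_pos_iff.2 hv)]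

theorem measure_eq_top_of_forall_add_smul_mem_or_sub_smul_mem [MeasurableSpace E] [BorelSpace E]
    {μ : Measure E} [μ.IsAddRightInvariant] [μ.InnerRegularCompactLTTop] {A U : Set E} {v : E}
    (hA : MeasurableSet A) (hU : IsBounded U) (hμU : μ U ≠ 0) (hv : v ≠ 0)
    (h : ∀ x ∈ U, ∀ t : ℝ, x + t • v ∈ A ∨ x - t • v ∈ A) : μ A = ∞ := by
  by_contra hμA
  obtain ⟨K, -, hK, hAK⟩ := hA.exists_isCompact_sdiff_lt hμA (ENNReal.half_pos hμU).ne'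
  obtain ⟨t, ht⟩ := exists_smul_notMem_of_isBounded
    ((hK.isBounded.sub hU).union (hU.sub hK.isBounded)) hv
  have hcover : U ⊆ (· + t • v) ⁻¹' (A \ K) ∪ (· + -(t • v)) ⁻¹' (A \ K) := by
    intro x hx
    have hadd : x + t • v ∉ K := fun hxK ↦ ht <| .inl ⟨_, hxK, x, hx, by simp⟩
    have hsub : x - t • v ∉ K := fun hxK ↦ ht <| .inr ⟨x, hx, _, hxK, by simp⟩
    simpa [hadd, hsub, ← sub_eq_add_neg] using h x hx t
  refine lt_irrefl (μ U) ?_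
  calc μ U ≤ μ ((· + t • v) ⁻¹' (A \ K)) + μ ((· + -(t • v)) ⁻¹' (A \ K)) :=
        (measure_mono hcover).trans (measure_union_le _ _)
    _ = μ (A \ K) + μ (A \ K) := by simp only [measure_preimage_add_right]
    _ < μ U / 2 + μ U / 2 := ENNReal.add_lt_add hAK hAK
    _ = μ U := ENNReal.add_halves _

theorem quadraticMap_parallelogram_law {R M N : Type*} [CommRing R] [AddCommGroup M] [Module R M]
    [AddCommGroup N] [Module R N] (Q : QuadraticMap R M N) (x y : M) :
    Q (x + y) + Q (x - y) = 2 • Q x + 2 • Q y := by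
  rw [sub_eq_add_neg, QuadraticMap.map_add Q, QuadraticMap.map_add Q, Q.map_neg, Q.polar_neg_right]
  abel

section FiniteDimensional

variable [FiniteDimensional ℝ E]

theorem continuous_quadraticForm (Q : QuadraticForm ℝ E) : Continuous Q := by
  have hQ : ⇑Q = fun x ↦ (QuadraticMap.associated Q).toContinuousBilinearMap x x := by
    ext x
    exact (QuadraticMap.associated_eq_self_apply ℝ Q x).symm
  rw [hQ]
  fun_prop

theorem exists_pos_mul_norm_sq_le_of_posDef {Q : QuadraticForm ℝ E} (hQ : Q.PosDef) :
    ∃ C > 0, ∀ x, C * ‖x‖ ^ 2 ≤ Q x := by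
  have hpos : ∀ x ∈ sphere (0 : E) 1, 0 < Q x := fun x hx ↦
    hQ x (ne_zero_of_mem_unit_sphere ⟨x, hx⟩)
  obtain ⟨C, hC, hCQ⟩ := (isCompact_sphere (0 : E) 1).exists_forall_le'
    (continuous_quadraticForm Q).continuousOn hpos
  refine ⟨C, hC, fun x ↦ ?_⟩
  obtain rfl | hx := eq_or_ne x 0
  · simp
  have hnorm : ‖x‖ ≠ 0 := norm_ne_zero_iff.2 hx
  have hunit : C ≤ Q (‖x‖⁻¹ • x) := hCQ _ (by simp [norm_smul, hnorm])
  calc C * ‖x‖ ^ 2 ≤ Q (‖x‖⁻¹ • x) * ‖x‖ ^ 2 := by gcongr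
    _ = Q x := by
      rw [Q.map_smul, smul_eq_mul]
      field_simp

variable [MeasurableSpace E] [BorelSpace E] (μ : Measure E) [μ.IsAddHaarMeasure]

theorem measure_quadraticForm_le_one_eq_top {Q : QuadraticForm ℝ E} {v : E} (hv : v ≠ 0)
    (hQv : Q v ≤ 0) : μ {x | Q x ≤ 1} = ∞ := by
  have hQ := continuous_quadraticForm Q
  have hU : IsOpen ({x | Q x < 1} ∩ ball 0 1) :=
    (isOpen_lt hQ continuous_const).inter isOpen_ball
  refine measure_eq_top_of_forall_add_smul_mem_or_sub_smul_mem
    (isClosed_le hQ continuous_const).measurableSet (isBounded_ball.subset Set.inter_subset_right)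
    (hU.measure_ne_zero μ ⟨0, by simp⟩) hv fun x hx t ↦ ?_
  have hx1 : Q x < 1 := hx.1
  have hpar := quadraticMap_parallelogram_law Q x (t • v)
  have hQtv : Q (t • v) ≤ 0 := by
    rw [Q.map_smul]
    exact mul_nonpos_of_nonneg_of_nonpos (mul_self_nonneg t) hQv
  by_contra! hout
  simp only [Set.mem_ofPred_eq, not_le] at hout
  simp only [nsmul_eq_mul, Nat.cast_ofNat] at hpar
  linarith

theorem integrable_exp_neg_mul_norm_sq {b : ℝ} (hb : 0 < b) :
    Integrable (fun x : E ↦ Real.exp (-b * ‖x‖ ^ 2)) μ := by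
  cases subsingleton_or_nontrivial E
  · exact .of_finite
  rw [integrable_fun_norm_addHaar μ (f := fun r ↦ Real.exp (-b * r ^ 2))]
  have hexp : (-1 : ℝ) < (Module.finrank ℝ E - 1 : ℕ) := by
    linarith [Nat.cast_nonneg (α := ℝ) (Module.finrank ℝ E - 1)]
  simpa using integrableOn_rpow_mul_exp_neg_mul_sq hb hexp

theorem integrable_exp_neg_mul_quadraticForm_iff_posDef {Q : QuadraticForm ℝ E} {c : ℝ}
    (hc : 0 < c) : Integrable (fun x ↦ Real.exp (-c * Q x)) μ ↔ Q.PosDef := by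
  constructor
  · intro hint v hv
    by_contra! hQv
    refine (hint.measure_ge_lt_top (Real.exp_pos (-c))).ne ?_
    simpa [hc] using measure_quadraticForm_le_one_eq_top μ hv hQv
  · intro hQ
    obtain ⟨C, hC, hCQ⟩ := exists_pos_mul_norm_sq_le_of_posDef hQ
    have hcont := continuous_quadraticForm Q
    refine (integrable_exp_neg_mul_norm_sq μ (mul_pos hc hC)).mono'
      (by fun_prop : Continuous fun x ↦ Real.exp (-c * Q x)).aestronglyMeasurable (.of_forall ?_)
    intro x
    rw [Real.norm_of_nonneg (Real.exp_nonneg _), neg_mul, neg_mul, mul_assoc]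
    gcongr
    exact hCQ x

end FiniteDimensional

theorem norm_cexp_I_div_mul_sq (ε : ℝ) (z : ℂ) :
    ‖Complex.exp (Complex.I / (2 * ε) * z)‖ ^ 2 = Real.exp (-ε⁻¹ * z.im) := by
  have hre : (Complex.I / (2 * ε) * z).re = -(2 * ε)⁻¹ * z.im := by
    have : Complex.I / (2 * ε) * z = ((2 * ε)⁻¹ : ℝ) * (Complex.I * z) := by
      push_cast
      ring
    rw [this, Complex.re_ofReal_mul, Complex.I_mul_re, mul_neg, neg_mul]
  rw [Complex.norm_exp, ← Real.exp_nat_mul, hre, mul_inv]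
  congr 1
  push_cast
  ring

theorem im_ofReal_dotProduct_mulVec {m k : Type*} [Fintype m] [Fintype k] (B : Matrix m k ℂ)
    (x : m → ℝ) (y : k → ℝ) :
    ((fun j ↦ (x j : ℂ)) ⬝ᵥ (B *ᵥ fun j ↦ (y j : ℂ))).im = x ⬝ᵥ (imMat B *ᵥ y) := by
  simp [imMat, dotProduct, mulVec, Complex.im_sum]

theorem integrable_exp_neg_mul_dotProduct_mulVec_iff_posDef {ι : Type*} [Fintype ι]
    {A : Matrix ι ι ℝ} (hA : A.IsSymm) {c : ℝ} (hc : 0 < c) :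
    Integrable (fun x : ι → ℝ ↦ Real.exp (-c * (x ⬝ᵥ (A *ᵥ x)))) ↔ A.PosDef := by
  classical
  have hform (x : ι → ℝ) : x ⬝ᵥ (A *ᵥ x) = A.toQuadraticForm' x := by
    simp [toQuadraticForm', toLinearMap₂'_apply']
  simp only [hform, integrable_exp_neg_mul_quadraticForm_iff_posDef volume hc]
  exact ⟨.of_toQuadraticForm' hA, PosDef.toQuadraticForm'⟩

theorem stmt9_general {ι : Type*} [Fintype ι] {ε : ℝ} (hε : 0 < ε) {B : Matrix ι ι ℂ}
    (hB : (imMat B).IsSymm) :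
    Integrable (fun x : ι → ℝ =>
        ‖Complex.exp ((Complex.I / (2 * ε)) *
          ((fun j => (x j : ℂ)) ⬝ᵥ (B *ᵥ fun j => (x j : ℂ))))‖ ^ 2)
      volume ↔ (imMat B).PosDef := by
  simp only [norm_cexp_I_div_mul_sq, im_ofReal_dotProduct_mulVec]
  exact integrable_exp_neg_mul_dotProduct_mulVec_iff_posDef hB (inv_pos.2 hε)

theorem stmt9 (n : ℕ) (hn : 1 ≤ n) (ε : ℝ) (hε : 0 < ε)
    (B : Matrix (Fin n) (Fin n) ℂ) (hB : B = Bᵀ) :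
    Integrable (fun x : Fin n → ℝ =>
        ‖Complex.exp ((Complex.I / (2 * ε)) *
          ((fun j => (x j : ℂ)) ⬝ᵥ (B *ᵥ fun j => (x j : ℂ))))‖ ^ 2)
      volume ↔ (imMat B).PosDef :=
  stmt9_general hε (congrArg imMat hB.symm)
end
end

section
/- Let n ≥ 1 and let Z ∈ ℂ^{2n×n} satisfy ZᵀΩZ = 0, and assume the Hermitian matrix (1/(2i))·Z*ΩZ is positive definite. Write Z = (P; Q) with P, Q ∈ ℂ^{n×n} the top and bottom n×n blocks. Then both P and Q are invertible. -/
open Matrix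
open scoped ComplexOrder

noncomputable section

/-- Top `n × n` block of a `2n × n` matrix. -/
def topBlock (n : ℕ) (Z : Matrix (Fin n ⊕ Fin n) (Fin n) ℂ) : Matrix (Fin n) (Fin n) ℂ :=
  Z.submatrix Sum.inl id

/-- Bottom `n × n` block of a `2n × n` matrix. -/
def botBlock (n : ℕ) (Z : Matrix (Fin n ⊕ Fin n) (Fin n) ℂ) : Matrix (Fin n) (Fin n) ℂ :=
  Z.submatrix Sum.inr id

/-!
The diagonal values of the symplectic form are `w* Ω w = q* p - p* q` for `w = (p; q)`, so they
vanish on the subspaces `p = 0` and `q = 0`. If `c · Z* Ω Z` is definite, a kernel vector `v` of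
`P` or of `Q` makes `Z v` lie in one of these subspaces, which forces `v = 0`.
-/

section PosDef

variable {l m R : Type*} [Fintype l] [Fintype m] [CommRing R]

lemma dotProduct_J_mulVec [DecidableEq l] (x y : l ⊕ l → R) :
    x ⬝ᵥ J l R *ᵥ y = x ∘ Sum.inr ⬝ᵥ y ∘ Sum.inl - x ∘ Sum.inl ⬝ᵥ y ∘ Sum.inr := by
  rw [dotProduct_block, J, fromBlocks_mulVec, Sum.elim_comp_inl, Sum.elim_comp_inr]
  simp only [zero_mulVec, neg_mulVec, one_mulVec, zero_add, add_zero, dotProduct_neg]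
  ring

variable [StarRing R] [PartialOrder R]

lemma eq_zero_of_posDef_smul_conjTranspose_mul_mul {A : Matrix l l R} {B : Matrix l m R} {c : R}
    (h : (c • (Bᴴ * A * B)).PosDef) {v : m → R} (hv : star (B *ᵥ v) ⬝ᵥ A *ᵥ (B *ᵥ v) = 0) :
    v = 0 := by
  by_contra hne
  refine (h.dotProduct_mulVec_pos hne).ne' ?_
  calc star v ⬝ᵥ (c • (Bᴴ * A * B)) *ᵥ v
      = c • (star (B *ᵥ v) ⬝ᵥ A *ᵥ (B *ᵥ v)) := by
        simp only [smul_mulVec, dotProduct_smul, star_mulVec, dotProduct_mulVec, vecMul_vecMul]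
    _ = 0 := by rw [hv, smul_zero]

variable [DecidableEq l] {Z : Matrix (l ⊕ l) m R} {c : R}

lemma toRows₁_mulVec_injective_of_posDef (h : (c • (Zᴴ * J l R * Z)).PosDef) :
    Function.Injective Z.toRows₁.mulVec := by
  refine (injective_iff_map_eq_zero Z.toRows₁.mulVecLin).2 fun v hv ↦
    eq_zero_of_posDef_smul_conjTranspose_mul_mul h ?_
  have htop : (Z *ᵥ v) ∘ Sum.inl = 0 := hv
  have hstar : star (Z *ᵥ v) ∘ Sum.inl = 0 := (congrArg star htop).trans (star_zero _)
  rw [dotProduct_J_mulVec, htop, hstar, dotProduct_zero, zero_dotProduct, sub_zero]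

lemma toRows₂_mulVec_injective_of_posDef (h : (c • (Zᴴ * J l R * Z)).PosDef) :
    Function.Injective Z.toRows₂.mulVec := by
  refine (injective_iff_map_eq_zero Z.toRows₂.mulVecLin).2 fun v hv ↦
    eq_zero_of_posDef_smul_conjTranspose_mul_mul h ?_
  have hbot : (Z *ᵥ v) ∘ Sum.inr = 0 := hv
  have hstar : star (Z *ᵥ v) ∘ Sum.inr = 0 := (congrArg star hbot).trans (star_zero _)
  rw [dotProduct_J_mulVec, hbot, hstar, dotProduct_zero, zero_dotProduct, sub_zero]

end PosDef

theorem stmt10_general {l K : Type*} [Fintype l] [DecidableEq l]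
    [Field K] [StarRing K] [PartialOrder K] {Z : Matrix (l ⊕ l) l K} {c : K}
    (h : (c • (Zᴴ * J l K * Z)).PosDef) :
    IsUnit Z.toRows₁ ∧ IsUnit Z.toRows₂ :=
  ⟨mulVec_injective_iff_isUnit.1 (toRows₁_mulVec_injective_of_posDef h),
    mulVec_injective_iff_isUnit.1 (toRows₂_mulVec_injective_of_posDef h)⟩

theorem stmt10 (n : ℕ) (hn : 1 ≤ n)
    (Z : Matrix (Fin n ⊕ Fin n) (Fin n) ℂ)
    (hiso : Zᵀ * Omc n * Z = 0)
    (hpos : ((2 * Complex.I)⁻¹ • (Zᴴ * Omc n * Z)).PosDef) :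
    IsUnit (topBlock n Z) ∧ IsUnit (botBlock n Z) :=
  stmt10_general hpos
end
end

section
/- Let n ≥ 1 and let H : ℝ → ℂ^{2n×2n} be continuous with H(t)ᵀ = H(t) for all t. Let S : ℝ → ℂ^{2n×2n} be differentiable with S'(t) = Ω·H(t)·S(t) and S(0) = I_{2n}. Let Z₀ ∈ ℂ^{2n×n} be a normalised Lagrangian frame (Z₀ᵀΩZ₀ = 0, Z₀*ΩZ₀ = 2i·Iₙ), and let N : ℝ → ℂ^{n×n} be differentiable with each N(t) invertible, such that Z(t) := S(t)·Z₀·N(t) satisfies Z(t)*ΩZ(t) = 2i·Iₙ for every t. Define G(t) := Ωᵀ·Re(Z(t)Z(t)*)·Ω and J(t) := −Ω·G(t). Then for every t: G'(t) = Re H(t)·Ω·G(t) − G(t)·Ω·Re H(t) − Im H(t) − G(t)·Ω·Im H(t)·Ω·G(t), and J'(t) = Ω·Re H(t)·J(t) − J(t)·Ω·Re H(t) + Ω·Im H(t) + J(t)·Ω·Im H(t)·J(t). -/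
open Matrix

noncomputable section

/-- The symplectic metric `G = Ωᵀ Re(W W*) Ω` of the Lagrangian frame `W`. -/
def symplMetric (n : ℕ) (W : Matrix (Fin n ⊕ Fin n) (Fin n) ℂ) :
    Matrix (Fin n ⊕ Fin n) (Fin n ⊕ Fin n) ℝ :=
  (Omr n)ᵀ * reMat (W * Wᴴ) * Omr n

/-!
Put `W = S Z₀` and `B = ΩH`, so that `W' = BW`. Since `H` is symmetric, `S(t)` is symplectic, hence
`Z = WN` is a normalised Lagrangian frame. The matrix `J` is real, and the two frame identities give
`JZ = -iZ`; cancelling `N` yields `JW = -iW`, whose derivative is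
`J'W = -iBW - JBW = (Re B J - J Re B + Im B + J Im B J) W`. A real matrix killing `W` kills `Z`
and its conjugate, whose columns together span `ℂ²ⁿ`, so the factor `W` can be dropped. The equation
for `G` follows from `G = ΩJ`.
-/

section MatrixDerivative

variable {𝕜 m k p : Type*} [NontriviallyNormedField 𝕜]

theorem hasDerivAt_matrix_iff [Finite k] {E : Type*} [NormedAddCommGroup E] [NormedSpace 𝕜 E]
    {M : 𝕜 → Matrix m k E} {M' : Matrix m k E} {t : 𝕜} :
    HasDerivAt M M' t ↔ ∀ i j, HasDerivAt (fun s => M s i j) (M' i j) t :=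
  have := Fintype.ofFinite k
  hasDerivAt_pi.trans (forall_congr' fun _ => hasDerivAt_pi)

theorem hasDerivAt_transpose [Finite m] [Finite k] {E : Type*} [NormedAddCommGroup E]
    [NormedSpace 𝕜 E] {M : 𝕜 → Matrix m k E} {M' : Matrix m k E} {t : 𝕜}
    (hM : HasDerivAt M M' t) :
    HasDerivAt (fun s => (M s)ᵀ) M'ᵀ t :=
  hasDerivAt_matrix_iff.2 fun i j => hasDerivAt_matrix_iff.1 hM j i

theorem hasDerivAt_matrix_mul [Fintype k] [Finite p] {R : Type*} [NormedRing R] [NormedAlgebra 𝕜 R]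
    {A : 𝕜 → Matrix m k R} {B : 𝕜 → Matrix k p R} {A' : Matrix m k R} {B' : Matrix k p R} {t : 𝕜}
    (hA : HasDerivAt A A' t) (hB : HasDerivAt B B' t) :
    HasDerivAt (fun s => A s * B s) (A' * B t + A t * B') t := by
  rw [hasDerivAt_matrix_iff] at hA hB ⊢
  intro i j
  simpa only [mul_apply, Matrix.add_apply, Finset.sum_add_distrib] using
    HasDerivAt.fun_sum (u := Finset.univ) fun x _ => (hA i x).fun_mul (hB x j)

theorem hasDerivAt_const_matrix_mul {R : Type*} [NormedRing R] [NormedAlgebra 𝕜 R]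
    [Fintype k] [Finite p] (C : Matrix m k R) {B : 𝕜 → Matrix k p R} {B' : Matrix k p R} {t : 𝕜}
    (hB : HasDerivAt B B' t) : HasDerivAt (fun s => C * B s) (C * B') t :=
  hasDerivAt_matrix_iff.2 fun i j => HasDerivAt.fun_sum fun x _ =>
    (hasDerivAt_matrix_iff.1 hB x j).const_mul (C i x)

theorem hasDerivAt_matrix_mul_const {R : Type*} [NormedRing R] [NormedAlgebra 𝕜 R]
    [Fintype k] [Finite p] {A : 𝕜 → Matrix m k R} {A' : Matrix m k R} {t : 𝕜}
    (hA : HasDerivAt A A' t) (C : Matrix k p R) : HasDerivAt (fun s => A s * C) (A' * C) t :=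
  hasDerivAt_matrix_iff.2 fun i j => HasDerivAt.fun_sum fun x _ =>
    (hasDerivAt_matrix_iff.1 hA i x).mul_const (C x j)

variable {t : ℝ}

theorem hasDerivAt_matrix_map_ofReal [Finite k] {M : ℝ → Matrix m k ℝ} {M' : Matrix m k ℝ}
    (hM : HasDerivAt M M' t) :
    HasDerivAt (fun s => (M s).map Complex.ofRealHom) (M'.map Complex.ofRealHom) t :=
  hasDerivAt_matrix_iff.2 fun i j => (hasDerivAt_matrix_iff.1 hM i j).ofReal_comp

theorem hasDerivAt_reMat [Finite k] {M : ℝ → Matrix m k ℂ} {M' : Matrix m k ℂ}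
    (hM : HasDerivAt M M' t) : HasDerivAt (fun s => reMat (M s)) (reMat M') t :=
  hasDerivAt_matrix_iff.2 fun i j =>
    Complex.reCLM.hasFDerivAt.comp_hasDerivAt t (hasDerivAt_matrix_iff.1 hM i j)

theorem hasDerivAt_conjTranspose [Finite m] [Finite k] {M : ℝ → Matrix m k ℂ}
    {M' : Matrix m k ℂ} (hM : HasDerivAt M M' t) : HasDerivAt (fun s => (M s)ᴴ) M'ᴴ t :=
  hasDerivAt_matrix_iff.2 fun i j => (hasDerivAt_matrix_iff.1 hM j i).star

end MatrixDerivative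

section RealAndImaginaryParts

variable {m k p : Type*}

theorem map_reMat_add_I_smul_map_imMat (M : Matrix m k ℂ) :
    (reMat M).map Complex.ofRealHom + Complex.I • (imMat M).map Complex.ofRealHom = M := by
  ext i j
  simp [reMat, imMat, mul_comm Complex.I]

theorem two_smul_map_reMat (M : Matrix m k ℂ) :
    (2 : ℂ) • (reMat M).map Complex.ofRealHom = M + M.map (starRingEnd ℂ) := by
  ext i j
  simp [reMat, Complex.add_conj]

theorem reMat_map_ofReal_mul [Fintype k] (A : Matrix m k ℝ) (B : Matrix k p ℂ) :
    reMat (A.map Complex.ofRealHom * B) = A * reMat B := by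
  ext i j
  simp [reMat, mul_apply]

theorem imMat_map_ofReal_mul [Fintype k] (A : Matrix m k ℝ) (B : Matrix k p ℂ) :
    imMat (A.map Complex.ofRealHom * B) = A * imMat B := by
  ext i j
  simp [imMat, mul_apply]

theorem map_ofReal_map_conj (A : Matrix m k ℝ) :
    (A.map Complex.ofRealHom).map (starRingEnd ℂ) = A.map Complex.ofRealHom := by
  ext i j
  simp

end RealAndImaginaryParts

section ComplexStructureFlow

variable {m k : Type*} [Fintype m] [Finite k]

theorem eq_of_hasDerivAt_of_map_ofReal_mul_eq_neg_I_smul {K : ℝ → Matrix m m ℝ}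
    {W : ℝ → Matrix m k ℂ} {K' : Matrix m m ℝ} {B : Matrix m m ℂ} {t : ℝ}
    (hK : HasDerivAt K K' t) (hW : HasDerivAt W (B * W t) t)
    (hKW : ∀ s, (K s).map Complex.ofRealHom * W s = -Complex.I • W s)
    (hinj : ∀ D : Matrix m m ℝ, D.map Complex.ofRealHom * W t = 0 → D = 0) :
    K' = reMat B * K t - K t * reMat B + imMat B + K t * imMat B * K t := by
  set 𝒦 := (K t).map Complex.ofRealHom with h𝒦
  set R := (reMat B).map Complex.ofRealHom
  set L := (imMat B).map Complex.ofRealHom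
  have hB : R + Complex.I • L = B := map_reMat_add_I_smul_map_imMat B
  have hderiv : K'.map Complex.ofRealHom * W t + 𝒦 * (B * W t) = -Complex.I • (B * W t) := by
    have hprod := hasDerivAt_matrix_mul (hasDerivAt_matrix_map_ofReal hK) hW
    simp only [hKW] at hprod
    ext i j
    exact (hasDerivAt_matrix_iff.1 hprod i j).unique
      ((hasDerivAt_matrix_iff.1 hW i j).const_smul (-Complex.I))
  have hfield : (reMat B * K t - K t * reMat B + imMat B + K t * imMat B * K t).map
      Complex.ofRealHom = R * 𝒦 - 𝒦 * R + L + 𝒦 * L * 𝒦 := by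
    simp [R, L, 𝒦, Matrix.map_add, Matrix.map_sub]
  have hagree : K'.map Complex.ofRealHom * W t = (R * 𝒦 - 𝒦 * R + L + 𝒦 * L * 𝒦) * W t := by
    rw [eq_sub_of_add_eq hderiv, ← hB]
    simp only [Matrix.add_mul, Matrix.sub_mul, Matrix.mul_add, Matrix.mul_assoc, h𝒦, hKW,
      Matrix.mul_smul, Matrix.smul_mul, smul_add, smul_smul, neg_mul, neg_neg, neg_smul,
      one_smul, Complex.I_mul_I, Matrix.mul_neg]
    abel
  refine sub_eq_zero.1 (hinj _ ?_)
  rw [Matrix.map_sub _ (map_sub _), hfield, Matrix.sub_mul, hagree, sub_self]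

end ComplexStructureFlow

section SymplecticFlow

variable {l : Type*} [Fintype l] [DecidableEq l]

theorem mem_symplecticGroup_of_hasDerivAt {𝕜 R : Type*} [RCLike 𝕜] [NormedCommRing R]
    [NormedAlgebra 𝕜 R] {H S : 𝕜 → Matrix (l ⊕ l) (l ⊕ l) R}
    (hH : ∀ t, (H t).IsSymm) (hS : ∀ t, HasDerivAt S (Matrix.J l R * H t * S t) t) {t₀ : 𝕜}
    (hS₀ : S t₀ ∈ symplecticGroup l R) (t : 𝕜) : S t ∈ symplecticGroup l R := by
  have hform (s : 𝕜) : HasDerivAt (fun s => (S s)ᵀ * Matrix.J l R * S s) 0 s := by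
    have hST : HasDerivAt (fun s => (S s)ᵀ) (Matrix.J l R * H s * S s)ᵀ s :=
      hasDerivAt_transpose (hS s)
    convert hasDerivAt_matrix_mul (hasDerivAt_matrix_mul_const hST (Matrix.J l R)) (hS s) using 1
    have hJJ (M : Matrix (l ⊕ l) (l ⊕ l) R) : Matrix.J l R * (Matrix.J l R * M) = -M := by
      rw [← Matrix.mul_assoc, J_squared, Matrix.neg_mul, Matrix.one_mul]
    simp [(hH s).eq, Matrix.mul_assoc, hJJ]
  rw [SymplecticGroup.mem_iff'] at hS₀ ⊢
  ext i j
  have hij (s : 𝕜) := hasDerivAt_matrix_iff.1 (hform s) i j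
  rw [is_const_of_deriv_eq_zero (fun s => (hij s).differentiableAt) (fun s => (hij s).deriv) t t₀,
    hS₀]

theorem isotropic_mul_of_mem_symplecticGroup {R k p : Type*} [CommRing R] [Fintype k]
    {S : Matrix (l ⊕ l) (l ⊕ l) R} (hS : S ∈ symplecticGroup l R) {Z : Matrix (l ⊕ l) k R}
    (hZ : Zᵀ * Matrix.J l R * Z = 0) (N : Matrix k p R) :
    (S * Z * N)ᵀ * Matrix.J l R * (S * Z * N) = 0 :=
  calc (S * Z * N)ᵀ * Matrix.J l R * (S * Z * N)
      = Nᵀ * (Zᵀ * (Sᵀ * Matrix.J l R * S) * Z) * N := by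
        simp only [Matrix.transpose_mul, Matrix.mul_assoc]
    _ = 0 := by
        rw [SymplecticGroup.mem_iff'.1 hS, hZ, Matrix.mul_zero, Matrix.zero_mul]

end SymplecticFlow

section LagrangianFrame

variable {l m : Type*} [Fintype l] [DecidableEq l]

/-- Normalised Lagrangian frames: the columns of `Z` span a Lagrangian subspace of `ℂ²ⁿ` and are
orthonormal for the Hermitian form `(v, w) ↦ v*Ωw / 2i`. The matrix `Ω` is `Matrix.J`. -/
structure IsNormalisedLagrangianFrame_s13 (Z : Matrix (l ⊕ l) l ℂ) : Prop where
  isotropic : Zᵀ * Matrix.J l ℂ * Z = 0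
  normalised : Zᴴ * Matrix.J l ℂ * Z = (2 * Complex.I) • (1 : Matrix l l ℂ)

/-- The complex structure `J = -ΩG` of the Lagrangian subspace spanned by the frame `Z`, with
`G = Ωᵀ Re(ZZ*) Ω` substituted and `-ΩΩᵀ = -1` cancelled. -/
def complexStructure (Z : Matrix (l ⊕ l) l ℂ) : Matrix (l ⊕ l) (l ⊕ l) ℝ :=
  -(reMat (Z * Zᴴ) * Matrix.J l ℝ)

namespace IsNormalisedLagrangianFrame_s13

variable {Z : Matrix (l ⊕ l) l ℂ}

theorem fromCols_conj_mul_eq_one (hZ : IsNormalisedLagrangianFrame_s13 Z) :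
    fromCols Z (Z.map (starRingEnd ℂ)) *
      ((2 * Complex.I)⁻¹ • (fromRows Zᴴ (-Zᵀ) * Matrix.J l ℂ)) = 1 := by
  have hconj (A : Matrix l (l ⊕ l) ℂ) :
      A.map (starRingEnd ℂ) * Matrix.J l ℂ * Z.map (starRingEnd ℂ) =
        (A * Matrix.J l ℂ * Z).map (starRingEnd ℂ) := by
    simp
  have hisotropic : Zᴴ * Matrix.J l ℂ * Z.map (starRingEnd ℂ) = 0 :=
    (hconj Zᵀ).trans (by simp [hZ.isotropic])
  have hnormalised : Zᵀ * Matrix.J l ℂ * Z.map (starRingEnd ℂ) = -((2 * Complex.I) • 1) := by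
    have hZH : Zᴴ.map (starRingEnd ℂ) = Zᵀ := by ext i j; simp
    rw [← hZH, hconj, hZ.normalised, map_smul' _ _ _ (map_mul _)]
    simp [show (starRingEnd ℂ) 2 = 2 from Complex.conj_ofNat 2]
  have hblocks : fromRows Zᴴ (-Zᵀ) * Matrix.J l ℂ * fromCols Z (Z.map (starRingEnd ℂ)) =
      (2 * Complex.I) • 1 := by
    rw [fromRows_mul, fromRows_mul_fromCols]
    simp only [Matrix.neg_mul, hZ.isotropic, hZ.normalised, hisotropic, hnormalised, neg_neg,
      neg_zero, ← fromBlocks_one, fromBlocks_smul, smul_zero]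
  rw [mul_eq_one_comm, Matrix.smul_mul, hblocks, smul_smul, inv_mul_cancel₀ (by simp), one_smul]

theorem eq_zero_of_map_ofReal_mul_eq_zero (hZ : IsNormalisedLagrangianFrame_s13 Z)
    {D : Matrix m (l ⊕ l) ℝ} (hD : D.map Complex.ofRealHom * Z = 0) : D = 0 := by
  have hDconj : D.map Complex.ofRealHom * Z.map (starRingEnd ℂ) = 0 := by
    rw [← map_ofReal_map_conj, ← Matrix.map_mul, hD]
    simp
  have hDℂ : D.map Complex.ofRealHom = 0 := by
    rw [← Matrix.mul_one (D.map _), ← hZ.fromCols_conj_mul_eq_one, ← Matrix.mul_assoc,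
      mul_fromCols, hD, hDconj]
    simp
  exact Matrix.map_injective Complex.ofRealHom.injective (by simpa using hDℂ)

theorem map_complexStructure_mul (hZ : IsNormalisedLagrangianFrame_s13 Z) :
    (complexStructure Z).map Complex.ofRealHom * Z = -Complex.I • Z := by
  have hPconj : (Z * Zᴴ).map (starRingEnd ℂ) = Z.map (starRingEnd ℂ) * Zᵀ := by
    rw [Matrix.map_mul]
    congr 1
    ext i j
    simp
  have htwo : (2 : ℂ) • ((reMat (Z * Zᴴ)).map Complex.ofRealHom * (Matrix.J l ℂ * Z)) =
      (2 : ℂ) • (Complex.I • Z) := by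
    rw [← Matrix.smul_mul, two_smul_map_reMat, hPconj, Matrix.add_mul, Matrix.mul_assoc,
      Matrix.mul_assoc, ← Matrix.mul_assoc Zᴴ, ← Matrix.mul_assoc Zᵀ, hZ.isotropic, hZ.normalised]
    simp [smul_smul]
  have hRe := smul_right_injective _ (two_ne_zero (α := ℂ)) htwo
  rw [complexStructure, Matrix.map_neg _ (map_neg _), Matrix.map_mul, map_J, Matrix.neg_mul,
    Matrix.mul_assoc, hRe, neg_smul]

theorem isUnit_det_of_mul {W : Matrix (l ⊕ l) l ℂ} {N : Matrix l l ℂ}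
    (hZ : IsNormalisedLagrangianFrame_s13 (W * N)) : IsUnit N.det := by
  have hinv : ((2 * Complex.I)⁻¹ • ((W * N)ᴴ * Matrix.J l ℂ * W)) * N = 1 := by
    rw [Matrix.smul_mul, Matrix.mul_assoc, hZ.normalised, smul_smul, inv_mul_cancel₀ (by simp),
      one_smul]
  exact isUnit_det_of_left_inverse hinv

theorem map_complexStructure_mul_of_mul {W : Matrix (l ⊕ l) l ℂ} {N : Matrix l l ℂ}
    (hZ : IsNormalisedLagrangianFrame_s13 (W * N)) :
    (complexStructure (W * N)).map Complex.ofRealHom * W = -Complex.I • W := by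
  have hW : W * N * N⁻¹ = W := mul_nonsing_inv_cancel_right N W hZ.isUnit_det_of_mul
  calc (complexStructure (W * N)).map Complex.ofRealHom * W
      = (complexStructure (W * N)).map Complex.ofRealHom * (W * N) * N⁻¹ := by
        rw [Matrix.mul_assoc, hW]
    _ = -Complex.I • W := by rw [hZ.map_complexStructure_mul, Matrix.smul_mul, hW]

end IsNormalisedLagrangianFrame_s13

theorem hasDerivAt_complexStructure {Z : ℝ → Matrix (l ⊕ l) l ℂ} {Z' : Matrix (l ⊕ l) l ℂ} {t : ℝ}
    (hZ : HasDerivAt Z Z' t) :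
    HasDerivAt (fun s => complexStructure (Z s))
      (-(reMat (Z' * (Z t)ᴴ + Z t * Z'ᴴ) * Matrix.J l ℝ)) t := by
  have hR := hasDerivAt_reMat (hasDerivAt_matrix_mul hZ (hasDerivAt_conjTranspose hZ))
  have hRJ := hasDerivAt_matrix_mul_const hR (Matrix.J l ℝ)
  exact hasDerivAt_matrix_iff.2 fun i j => (hasDerivAt_matrix_iff.1 hRJ i j).fun_neg

theorem hasDerivAt_complexStructure_mul {W : ℝ → Matrix (l ⊕ l) l ℂ} {N : ℝ → Matrix l l ℂ}
    {B : Matrix (l ⊕ l) (l ⊕ l) ℂ} {N' : Matrix l l ℂ} {t : ℝ} (hW : HasDerivAt W (B * W t) t)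
    (hN : HasDerivAt N N' t) (hZ : ∀ s, IsNormalisedLagrangianFrame_s13 (W s * N s)) :
    HasDerivAt (fun s => complexStructure (W s * N s))
      (reMat B * complexStructure (W t * N t) - complexStructure (W t * N t) * reMat B + imMat B +
        complexStructure (W t * N t) * imMat B * complexStructure (W t * N t)) t := by
  have hJ := hasDerivAt_complexStructure (hasDerivAt_matrix_mul hW hN)
  rwa [eq_of_hasDerivAt_of_map_ofReal_mul_eq_neg_I_smul hJ hW
    (fun s => (hZ s).map_complexStructure_mul_of_mul) fun D hD =>
      (hZ t).eq_zero_of_map_ofReal_mul_eq_zero <| by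
        rw [← Matrix.mul_assoc, hD, Matrix.zero_mul]] at hJ

end LagrangianFrame

section SymplecticMetric

variable {n : ℕ} (Z : Matrix (Fin n ⊕ Fin n) (Fin n) ℂ)

theorem Omr_mul_Omr_mul {k : Type*} (M : Matrix (Fin n ⊕ Fin n) k ℝ) :
    Omr n * (Omr n * M) = -M := by
  rw [← Matrix.mul_assoc, show Omr n * Omr n = -1 from J_squared (Fin n) ℝ, Matrix.neg_mul,
    Matrix.one_mul]

theorem symplMetric_eq_Omr_mul_complexStructure : symplMetric n Z = Omr n * complexStructure Z := by
  have hT : (Omr n)ᵀ = -Omr n := J_transpose (Fin n) ℝ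
  have hC : complexStructure Z = -(reMat (Z * Zᴴ) * Omr n) := rfl
  rw [symplMetric, hT, hC, Matrix.mul_neg, Matrix.neg_mul, Matrix.neg_mul, Matrix.mul_assoc]

theorem complexStructure_eq_neg_Omr_mul_symplMetric :
    complexStructure Z = -(Omr n * symplMetric n Z) := by
  rw [symplMetric_eq_Omr_mul_complexStructure, Omr_mul_Omr_mul, neg_neg]

theorem hasDerivAt_complexStructure_of_hamiltonian {H : Matrix (Fin n ⊕ Fin n) (Fin n ⊕ Fin n) ℂ}
    {W : ℝ → Matrix (Fin n ⊕ Fin n) (Fin n) ℂ} {N : ℝ → Matrix (Fin n) (Fin n) ℂ}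
    {N' : Matrix (Fin n) (Fin n) ℂ} {t : ℝ}
    (hW : HasDerivAt W (Omc n * H * W t) t) (hN : HasDerivAt N N' t)
    (hZ : ∀ s, IsNormalisedLagrangianFrame_s13 (W s * N s)) :
    HasDerivAt (fun s => complexStructure (W s * N s))
      (Omr n * reMat H * complexStructure (W t * N t)
        - complexStructure (W t * N t) * Omr n * reMat H
        + Omr n * imMat H
        + complexStructure (W t * N t) * Omr n * imMat H * complexStructure (W t * N t)) t := by
  have hΩ : Omc n = (Omr n).map Complex.ofRealHom := (map_J (Fin n) Complex.ofRealHom).symm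
  have hJ := hasDerivAt_complexStructure_mul hW hN hZ
  simpa only [hΩ, reMat_map_ofReal_mul, imMat_map_ofReal_mul, ← Matrix.mul_assoc] using hJ

theorem hasDerivAt_symplMetric_of_hamiltonian {H : Matrix (Fin n ⊕ Fin n) (Fin n ⊕ Fin n) ℂ}
    {W : ℝ → Matrix (Fin n ⊕ Fin n) (Fin n) ℂ} {N : ℝ → Matrix (Fin n) (Fin n) ℂ}
    {N' : Matrix (Fin n) (Fin n) ℂ} {t : ℝ}
    (hW : HasDerivAt W (Omc n * H * W t) t) (hN : HasDerivAt N N' t)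
    (hZ : ∀ s, IsNormalisedLagrangianFrame_s13 (W s * N s)) :
    HasDerivAt (fun s => symplMetric n (W s * N s))
      (reMat H * Omr n * symplMetric n (W t * N t)
        - symplMetric n (W t * N t) * Omr n * reMat H
        - imMat H
        - symplMetric n (W t * N t) * Omr n * imMat H * Omr n * symplMetric n (W t * N t)) t := by
  have hG := hasDerivAt_const_matrix_mul (Omr n)
    (hasDerivAt_complexStructure_of_hamiltonian hW hN hZ)
  simp only [← symplMetric_eq_Omr_mul_complexStructure] at hG
  convert hG using 1
  simp only [complexStructure_eq_neg_Omr_mul_symplMetric, Matrix.mul_add, Matrix.mul_sub,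
    Matrix.mul_assoc, Matrix.mul_neg, Matrix.neg_mul, Omr_mul_Omr_mul]
  abel

end SymplecticMetric

theorem stmt13_general (n : ℕ)
    (H : ℝ → Matrix (Fin n ⊕ Fin n) (Fin n ⊕ Fin n) ℂ)
    (hHsymm : ∀ t, (H t)ᵀ = H t)
    (S : ℝ → Matrix (Fin n ⊕ Fin n) (Fin n ⊕ Fin n) ℂ)
    (hS0 : S 0 ∈ symplecticGroup (Fin n) ℂ)
    (hSderiv : ∀ t i j, HasDerivAt (fun s => S s i j) ((Omc n * H t * S t) i j) t)
    (Z₀ : Matrix (Fin n ⊕ Fin n) (Fin n) ℂ)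
    (hZ₀iso : Z₀ᵀ * Omc n * Z₀ = 0)
    (N : ℝ → Matrix (Fin n) (Fin n) ℂ)
    (hNdiff : ∀ t i j, DifferentiableAt ℝ (fun s => N s i j) t)
    (hZnorm : ∀ t, (S t * Z₀ * N t)ᴴ * Omc n * (S t * Z₀ * N t) =
      (2 * Complex.I) • (1 : Matrix (Fin n) (Fin n) ℂ)) :
    (∀ t i j, HasDerivAt (fun s => symplMetric n (S s * Z₀ * N s) i j)
      ((reMat (H t) * Omr n * symplMetric n (S t * Z₀ * N t)
        - symplMetric n (S t * Z₀ * N t) * Omr n * reMat (H t)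
        - imMat (H t)
        - symplMetric n (S t * Z₀ * N t) * Omr n * imMat (H t) * Omr n *
            symplMetric n (S t * Z₀ * N t)) i j) t) ∧
    (∀ t i j, HasDerivAt (fun s => (-(Omr n * symplMetric n (S s * Z₀ * N s))) i j)
      ((Omr n * reMat (H t) * (-(Omr n * symplMetric n (S t * Z₀ * N t)))
        - (-(Omr n * symplMetric n (S t * Z₀ * N t))) * Omr n * reMat (H t)
        + Omr n * imMat (H t)
        + (-(Omr n * symplMetric n (S t * Z₀ * N t))) * Omr n * imMat (H t) *
            (-(Omr n * symplMetric n (S t * Z₀ * N t)))) i j) t) := by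
  have hS (t : ℝ) : HasDerivAt S (Omc n * H t * S t) t := hasDerivAt_matrix_iff.2 (hSderiv t)
  have hN (t : ℝ) : HasDerivAt N (of fun i j => deriv (fun s => N s i j) t) t :=
    hasDerivAt_matrix_iff.2 fun i j => (hNdiff t i j).hasDerivAt
  have hW (t : ℝ) : HasDerivAt (fun s => S s * Z₀) (Omc n * H t * (S t * Z₀)) t := by
    rw [← Matrix.mul_assoc]
    exact hasDerivAt_matrix_mul_const (hS t) Z₀
  have hZ (t : ℝ) : IsNormalisedLagrangianFrame_s13 (S t * Z₀ * N t) :=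
    ⟨isotropic_mul_of_mem_symplecticGroup (mem_symplecticGroup_of_hasDerivAt hHsymm hS hS0 t)
      hZ₀iso (N t), hZnorm t⟩
  have hG (t : ℝ) := hasDerivAt_symplMetric_of_hamiltonian (hW t) (hN t) hZ
  have hJ (t : ℝ) := hasDerivAt_complexStructure_of_hamiltonian (hW t) (hN t) hZ
  simp only [complexStructure_eq_neg_Omr_mul_symplMetric] at hJ
  exact ⟨fun t => hasDerivAt_matrix_iff.1 (hG t), fun t => hasDerivAt_matrix_iff.1 (hJ t)⟩

theorem stmt13 (n : ℕ) (hn : 1 ≤ n)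
    (H : ℝ → Matrix (Fin n ⊕ Fin n) (Fin n ⊕ Fin n) ℂ)
    (hHcont : ∀ i j, Continuous fun t => H t i j)
    (hHsymm : ∀ t, (H t)ᵀ = H t)
    (S : ℝ → Matrix (Fin n ⊕ Fin n) (Fin n ⊕ Fin n) ℂ)
    (hS0 : S 0 = 1)
    (hSderiv : ∀ t i j, HasDerivAt (fun s => S s i j) ((Omc n * H t * S t) i j) t)
    (Z₀ : Matrix (Fin n ⊕ Fin n) (Fin n) ℂ)
    (hZ₀iso : Z₀ᵀ * Omc n * Z₀ = 0)
    (hZ₀norm : Z₀ᴴ * Omc n * Z₀ = (2 * Complex.I) • (1 : Matrix (Fin n) (Fin n) ℂ))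
    (N : ℝ → Matrix (Fin n) (Fin n) ℂ)
    (hNdiff : ∀ t i j, DifferentiableAt ℝ (fun s => N s i j) t)
    (hNunit : ∀ t, IsUnit (N t))
    (hZnorm : ∀ t, (S t * Z₀ * N t)ᴴ * Omc n * (S t * Z₀ * N t) =
      (2 * Complex.I) • (1 : Matrix (Fin n) (Fin n) ℂ)) :
    -- let G(t) and J(t) be the symplectic metric and complex structure of Z(t) = S(t)Z₀N(t)
    (∀ t i j, HasDerivAt (fun s => symplMetric n (S s * Z₀ * N s) i j)
      ((reMat (H t) * Omr n * symplMetric n (S t * Z₀ * N t)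
        - symplMetric n (S t * Z₀ * N t) * Omr n * reMat (H t)
        - imMat (H t)
        - symplMetric n (S t * Z₀ * N t) * Omr n * imMat (H t) * Omr n *
            symplMetric n (S t * Z₀ * N t)) i j) t) ∧
    (∀ t i j, HasDerivAt (fun s => (-(Omr n * symplMetric n (S s * Z₀ * N s))) i j)
      ((Omr n * reMat (H t) * (-(Omr n * symplMetric n (S t * Z₀ * N t)))
        - (-(Omr n * symplMetric n (S t * Z₀ * N t))) * Omr n * reMat (H t)
        + Omr n * imMat (H t)
        + (-(Omr n * symplMetric n (S t * Z₀ * N t))) * Omr n * imMat (H t) *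
            (-(Omr n * symplMetric n (S t * Z₀ * N t)))) i j) t) := by
  exact stmt13_general n H hHsymm S (hS0 ▸ one_mem _) hSderiv Z₀ hZ₀iso N hNdiff hZnorm
end
end

section
/- Let n ≥ 1, let Z₀ ∈ ℂ^{2n×n} be a normalised Lagrangian frame (Z₀ᵀΩZ₀ = 0, Z₀*ΩZ₀ = 2i·Iₙ), and let S ∈ ℂ^{2n×2n} be complex symplectic (SᵀΩS = Ω). Let Z ∈ ℂ^{2n×n} be a normalised Lagrangian frame with range Z = range(S·Z₀), and assume range Z is positive, i.e. h(l, l) > 0 for every nonzero l ∈ range Z. Define C := (i/2)·Z*·Ωᵀ·S̄·Z₀ and D := (i/2)·Z*·Ωᵀ·S·Z̄₀. Then S̄·Z₀ = Z·C + Z̄·D̄, and moreover C and D are the unique matrices in ℂ^{n×n} with this property. -/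
open Matrix

noncomputable section

/-- The Hermitian form `h(z, z') = (i/2) ⬝ z̄ · (Ωᵀ z')` on `ℂ^{2n}`. -/
def hformN (n : ℕ) (z z' : Fin n ⊕ Fin n → ℂ) : ℂ :=
  (Complex.I / 2) * (star z ⬝ᵥ ((Omc n)ᵀ *ᵥ z'))

/-!
The Gram matrix of `h` for the columns of `(Z, Z̄)` is `diag(Iₙ, -Iₙ)`: normalisation gives the
diagonal blocks and isotropy the off-diagonal ones. Hence the columns of `(Z, Z̄)` form a
pseudo-orthonormal basis of `ℂ²ⁿ`, in which every matrix `A` with `2n` rows has the expansion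
`A = Z h(Z, A) - Z̄ h(Z̄, A)`. Finally `-h(Z̄, A)` is the conjugate of `h(Z, Ā)`.
-/

section

variable {l m k p : Type*}

theorem map_conj_map_conj (A : Matrix m k ℂ) :
    (A.map (starRingEnd ℂ)).map (starRingEnd ℂ) = A := by
  ext i j
  simp

theorem map_conj_conjTranspose (A : Matrix m k ℂ) : (A.map (starRingEnd ℂ))ᴴ = Aᵀ :=
  map_conj_map_conj Aᵀ

theorem Omc_eq_J (n : ℕ) : Omc n = J (Fin n) ℂ := rfl

variable [Fintype l] [DecidableEq l]

/-- The matrix of values `h(a, b)` of the Hermitian form `h` on the columns `a` of `A` and `b` of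
`B`. The matrix `Ω` is written as Mathlib's `Matrix.J`. -/
def hermGram (A : Matrix (l ⊕ l) m ℂ) (B : Matrix (l ⊕ l) k ℂ) : Matrix m k ℂ :=
  (Complex.I / 2) • (Aᴴ * (J l ℂ)ᵀ * B)

theorem hermGram_add_right (A : Matrix (l ⊕ l) m ℂ) (B B' : Matrix (l ⊕ l) k ℂ) :
    hermGram A (B + B') = hermGram A B + hermGram A B' := by
  rw [hermGram, Matrix.mul_add, smul_add, hermGram, hermGram]

theorem hermGram_mul_right [Fintype k] (A : Matrix (l ⊕ l) m ℂ) (B : Matrix (l ⊕ l) k ℂ)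
    (C : Matrix k p ℂ) : hermGram A (B * C) = hermGram A B * C := by
  rw [hermGram, hermGram, Matrix.smul_mul, Matrix.mul_assoc _ B C]

theorem hermGram_one_mul (A : Matrix (l ⊕ l) m ℂ) (B : Matrix (l ⊕ l) k ℂ) :
    hermGram A (1 : Matrix (l ⊕ l) (l ⊕ l) ℂ) * B = hermGram A B := by
  rw [← hermGram_mul_right, Matrix.one_mul]

theorem hermGram_map_conj (A : Matrix (l ⊕ l) m ℂ) (B : Matrix (l ⊕ l) k ℂ) :
    hermGram (A.map (starRingEnd ℂ)) (B.map (starRingEnd ℂ)) =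
      -(hermGram A B).map (starRingEnd ℂ) := by
  have conj_half_I : starRingEnd ℂ (Complex.I / 2) = -(Complex.I / 2) := by
    rw [map_div₀, Complex.conj_I, Complex.conj_ofNat, neg_div]
  rw [hermGram, hermGram, Matrix.map_smulₛₗ _ (starRingEnd ℂ) _ (fun _ => map_mul _ _ _),
    conj_half_I, neg_smul, neg_neg, Matrix.map_mul, Matrix.map_mul, transpose_map, map_J,
    conjTranspose_map (starRingEnd ℂ) fun _ => rfl]

theorem hermGram_map_conj_left (A : Matrix (l ⊕ l) m ℂ) (B : Matrix (l ⊕ l) k ℂ) :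
    hermGram (A.map (starRingEnd ℂ)) B =
      -(hermGram A (B.map (starRingEnd ℂ))).map (starRingEnd ℂ) := by
  rw [← hermGram_map_conj, map_conj_map_conj]

/-- Normalised Lagrangian frames: the columns of `Z` span an `Ω`-isotropic subspace and satisfy
`Z* Ω Z = 2i`. The frame may have any number of columns; it is Lagrangian when they are indexed
by `l`. -/
structure IsNormalisedLagrangianFrame_s14 [DecidableEq m] (Z : Matrix (l ⊕ l) m ℂ) : Prop where
  isotropic : Zᵀ * J l ℂ * Z = 0
  normalised : Zᴴ * J l ℂ * Z = (2 * Complex.I) • (1 : Matrix m m ℂ)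

namespace IsNormalisedLagrangianFrame_s14

section

variable [DecidableEq m] {Z : Matrix (l ⊕ l) m ℂ}

theorem hermGram_self (hZ : IsNormalisedLagrangianFrame_s14 Z) : hermGram Z Z = 1 := by
  have half_I_mul : Complex.I / 2 * (2 * Complex.I) = -1 := by
    linear_combination Complex.I_mul_I
  rw [hermGram, J_transpose, Matrix.mul_neg, Matrix.neg_mul, hZ.normalised, smul_neg, smul_smul,
    half_I_mul, neg_one_smul, neg_neg]

theorem hermGram_conj_self (hZ : IsNormalisedLagrangianFrame_s14 Z) :
    hermGram (Z.map (starRingEnd ℂ)) Z = 0 := by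
  rw [hermGram, map_conj_conjTranspose, J_transpose, Matrix.mul_neg, Matrix.neg_mul,
    hZ.isotropic, neg_zero, smul_zero]

theorem hermGram_self_conj (hZ : IsNormalisedLagrangianFrame_s14 Z) :
    hermGram Z (Z.map (starRingEnd ℂ)) = 0 := by
  rw [← map_conj_map_conj Z, hermGram_map_conj, map_conj_map_conj, hZ.hermGram_conj_self,
    Matrix.map_zero _ (map_zero _), neg_zero]

theorem hermGram_conj_conj (hZ : IsNormalisedLagrangianFrame_s14 Z) :
    hermGram (Z.map (starRingEnd ℂ)) (Z.map (starRingEnd ℂ)) = -1 := by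
  rw [hermGram_map_conj, hZ.hermGram_self, Matrix.map_one _ (map_zero _) (map_one _)]

theorem hermGram_mul_add_conj_mul [Fintype m] (hZ : IsNormalisedLagrangianFrame_s14 Z)
    (C E : Matrix m k ℂ) : hermGram Z (Z * C + Z.map (starRingEnd ℂ) * E) = C := by
  rw [hermGram_add_right, hermGram_mul_right, hermGram_mul_right, hZ.hermGram_self,
    hZ.hermGram_self_conj, Matrix.one_mul, Matrix.zero_mul, add_zero]

end

variable {Z : Matrix (l ⊕ l) l ℂ}

theorem mul_hermGram_sub_conj_mul_hermGram (hZ : IsNormalisedLagrangianFrame_s14 Z)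
    (A : Matrix (l ⊕ l) k ℂ) :
    Z * hermGram Z A - Z.map (starRingEnd ℂ) * hermGram (Z.map (starRingEnd ℂ)) A = A := by
  set Zc := Z.map (starRingEnd ℂ)
  let P : Matrix l (l ⊕ l) ℂ := hermGram Z 1
  let Q : Matrix l (l ⊕ l) ℂ := hermGram Zc 1
  have left_inv : fromRows P (-Q) * fromCols Z Zc = 1 := by
    simp only [P, Q, Zc, fromRows_mul_fromCols, Matrix.neg_mul, hermGram_one_mul, hZ.hermGram_self,
      hZ.hermGram_self_conj, hZ.hermGram_conj_self, hZ.hermGram_conj_conj, neg_zero, neg_neg,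
      fromBlocks_one]
  have right_inv : Z * P - Zc * Q = 1 := by
    rw [sub_eq_add_neg, ← Matrix.mul_neg, ← fromCols_mul_fromRows]
    exact mul_eq_one_comm.mp left_inv
  calc Z * hermGram Z A - Zc * hermGram Zc A
      = (Z * P - Zc * Q) * A := by
        rw [Matrix.sub_mul, Matrix.mul_assoc, Matrix.mul_assoc, hermGram_one_mul, hermGram_one_mul]
    _ = A := by rw [right_inv, Matrix.one_mul]

end IsNormalisedLagrangianFrame_s14

theorem stmt14_general {Z : Matrix (l ⊕ l) l ℂ} (hZ : IsNormalisedLagrangianFrame_s14 Z)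
    (A : Matrix (l ⊕ l) k ℂ) :
    let C := hermGram Z A
    let D := hermGram Z (A.map (starRingEnd ℂ))
    A = Z * C + Z.map (starRingEnd ℂ) * D.map (starRingEnd ℂ) ∧
      ∀ C' D' : Matrix l k ℂ,
        A = Z * C' + Z.map (starRingEnd ℂ) * D'.map (starRingEnd ℂ) → C' = C ∧ D' = D := by
  refine ⟨?_, fun C' D' hA => ⟨?_, ?_⟩⟩
  · simpa only [hermGram_map_conj_left, Matrix.mul_neg, sub_neg_eq_add] using
      (hZ.mul_hermGram_sub_conj_mul_hermGram A).symm
  · rw [hA, hZ.hermGram_mul_add_conj_mul]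
  · have hA_conj : A.map (starRingEnd ℂ) =
        Z * D' + Z.map (starRingEnd ℂ) * C'.map (starRingEnd ℂ) := by
      rw [hA, Matrix.map_add _ (map_add _), Matrix.map_mul, Matrix.map_mul, map_conj_map_conj,
        map_conj_map_conj, add_comm]
    rw [hA_conj, hZ.hermGram_mul_add_conj_mul]

end

theorem stmt14 (n : ℕ) (hn : 1 ≤ n)
    (Z₀ Z : Matrix (Fin n ⊕ Fin n) (Fin n) ℂ)
    (S : Matrix (Fin n ⊕ Fin n) (Fin n ⊕ Fin n) ℂ)
    (hZ₀iso : Z₀ᵀ * Omc n * Z₀ = 0)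
    (hZ₀norm : Z₀ᴴ * Omc n * Z₀ = (2 * Complex.I) • (1 : Matrix (Fin n) (Fin n) ℂ))
    (hS : Sᵀ * Omc n * S = Omc n)
    (hZiso : Zᵀ * Omc n * Z = 0)
    (hZnorm : Zᴴ * Omc n * Z = (2 * Complex.I) • (1 : Matrix (Fin n) (Fin n) ℂ))
    (hrange : Set.range Z.mulVec = Set.range (S * Z₀).mulVec)
    (hposL : ∀ c : Fin n → ℂ, Z.mulVec c ≠ 0 →
      0 < (hformN n (Z.mulVec c) (Z.mulVec c)).re ∧
        (hformN n (Z.mulVec c) (Z.mulVec c)).im = 0) :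
    let C := (Complex.I / 2) • (Zᴴ * (Omc n)ᵀ * S.map (starRingEnd ℂ) * Z₀)
    let D := (Complex.I / 2) • (Zᴴ * (Omc n)ᵀ * S * Z₀.map (starRingEnd ℂ))
    -- decomposition S̄ Z₀ = Z C + Z̄ D̄
    (S.map (starRingEnd ℂ) * Z₀ =
      Z * C + Z.map (starRingEnd ℂ) * D.map (starRingEnd ℂ)) ∧
    -- uniqueness
    (∀ C' D' : Matrix (Fin n) (Fin n) ℂ,
      S.map (starRingEnd ℂ) * Z₀ =
        Z * C' + Z.map (starRingEnd ℂ) * D'.map (starRingEnd ℂ) →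
      C' = C ∧ D' = D) := by
  simpa only [Omc_eq_J, hermGram, Matrix.map_mul, map_conj_map_conj, ← Matrix.mul_assoc] using
    stmt14_general ⟨hZiso, hZnorm⟩ (S.map (starRingEnd ℂ) * Z₀)
end
end

section
/- Let n ≥ 1, let Z₀ ∈ ℂ^{2n×n} be a normalised Lagrangian frame, let S ∈ ℂ^{2n×2n} be complex symplectic (SᵀΩS = Ω), and let N ∈ ℂ^{n×n} be Hermitian and positive definite such that Z := S·Z₀·N is normalised (Z*ΩZ = 2i·Iₙ). Assume h(l, l) > 0 for every nonzero l ∈ range Z, and set G := Ωᵀ·Re(ZZ*)·Ω, C := (i/2)·Z*·Ωᵀ·S̄·Z₀ and D := (i/2)·Z*·Ωᵀ·S·Z̄₀. Then: (i) C = N; (ii) M := Dᵀ·C̄ = (1/4)·(S·Z̄₀)ᵀ·G·(S·Z̄₀); (iii) M is symmetric (M = Mᵀ). -/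
open Matrix
open scoped ComplexOrder

noncomputable section

/-!
Adjoin to a normalised Lagrangian frame `Z` its conjugate: `P = (Z, Z̄)` satisfies
`Pᵀ Ω P = 2i Ω`, so every `W` with `2n` rows has an expansion `W = Z A + Z̄ B`, and solving for the
coefficients gives `A = h(Z, W)` and `B = conj h(Z, W̄)`. In these coordinates the symplectic form
is `Wᵀ Ω W = 2i (Bᵀ A - Aᵀ B)`, while the metric of `Z` is `Wᵀ G W = 2 (Aᵀ B + Bᵀ A)`. If `W` is
isotropic then `Aᵀ B` is therefore symmetric and `Wᵀ G W = 4 Aᵀ B`. For `W = S Z̄₀` the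
coefficients are `A = D` and `B = C̄`, and `C = h(S Z₀ N, S̄ Z₀) = Nᴴ h(Z₀, Z₀) = Nᴴ` because `S`
preserves `Ω`.
-/

open scoped ComplexConjugate

variable {l m k R : Type*}

theorem I_div_two_mul_two_mul_I : Complex.I / 2 * (2 * Complex.I) = -1 := by
  linear_combination Complex.I_mul_I

theorem transpose_map_conj_s15 (M : Matrix m k ℂ) : (M.map conj)ᵀ = Mᴴ := rfl

theorem conjTranspose_map_conj_s15 (M : Matrix m k ℂ) : (M.map conj)ᴴ = Mᵀ := by
  ext i j
  simp

theorem map_conj_map_conj_s15 (M : Matrix m k ℂ) : (M.map conj).map conj = M := by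
  ext i j
  simp

theorem map_ofReal_reMat (M : Matrix m k ℂ) :
    (reMat M).map Complex.ofReal = (2 : ℂ)⁻¹ • (M + M.map conj) := by
  ext i j
  simp [reMat, Complex.re_eq_add_conj, div_eq_inv_mul]

/-- The matrix `(Z, Z̄)` whose columns are those of `Z` followed by their conjugates; for a
normalised Lagrangian frame `Z` they form a basis of `ℂ²ⁿ`, in which the symplectic form and the
metric of `Z` become constant matrices. -/
def conjFrame (Z : Matrix m k ℂ) : Matrix m (k ⊕ k) ℂ :=
  fromCols Z (Z.map conj)

theorem conjFrame_transpose (Z : Matrix m k ℂ) : (conjFrame Z)ᵀ = fromRows Zᵀ Zᴴ := by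
  rw [conjFrame, transpose_fromCols, transpose_map_conj_s15]

variable [Fintype l] [DecidableEq l]

section Isotropic

variable [CommRing R]

/-- The columns of `W` span an isotropic subspace for the symplectic form `Ω`, encoded as Mathlib's
`Matrix.J l R`. -/
def IsIsotropic (W : Matrix (l ⊕ l) m R) : Prop :=
  Wᵀ * J l R * W = 0

namespace IsIsotropic

variable {W : Matrix (l ⊕ l) m R}

theorem mul_right [Fintype m] (hW : IsIsotropic W) (B : Matrix m k R) : IsIsotropic (W * B) := by
  have hmul : (W * B)ᵀ * J l R * (W * B) = Bᵀ * (Wᵀ * J l R * W) * B := by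
    simp only [transpose_mul, Matrix.mul_assoc]
  rw [IsIsotropic, hmul, hW, Matrix.mul_zero, Matrix.zero_mul]

theorem symplectic_mul {S : Matrix (l ⊕ l) (l ⊕ l) R} (hS : S ∈ symplecticGroup l R)
    (hW : IsIsotropic W) : IsIsotropic (S * W) := by
  have hmul : (S * W)ᵀ * J l R * (S * W) = Wᵀ * (Sᵀ * J l R * S) * W := by
    simp only [transpose_mul, Matrix.mul_assoc]
  rw [IsIsotropic, hmul, SymplecticGroup.mem_iff'.mp hS, hW]

theorem map {R' : Type*} [CommRing R'] (hW : IsIsotropic W) (f : R →+* R') :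
    IsIsotropic (W.map f) := by
  rw [IsIsotropic, ← transpose_map, ← map_J l f, ← Matrix.map_mul, ← Matrix.map_mul, hW]
  exact Matrix.map_zero f (map_zero f)

end IsIsotropic

theorem J_mul_fromRows (A B : Matrix l m R) : J l R * fromRows A B = fromRows (-B) A := by
  simp [J, fromBlocks_mul_fromRows]

theorem fromRows_transpose_mul_J_mul_fromRows (A B : Matrix l m R) :
    (fromRows A B)ᵀ * J l R * fromRows A B = Bᵀ * A - Aᵀ * B := by
  rw [Matrix.mul_assoc, J_mul_fromRows, transpose_fromRows, fromCols_mul_fromRows, Matrix.mul_neg,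
    neg_add_eq_sub]

end Isotropic

section HermitianGram

/-- The matrix of values `h(xᵢ, yⱼ)` of the Hermitian form on the columns of `X` and `Y`. -/
def hermitianGram (X : Matrix (l ⊕ l) m ℂ) (Y : Matrix (l ⊕ l) k ℂ) : Matrix m k ℂ :=
  (Complex.I / 2) • (Xᴴ * (J l ℂ)ᵀ * Y)

theorem hermitianGram_mul_left [Fintype m] {p : Type*} (X : Matrix (l ⊕ l) m ℂ) (N : Matrix m p ℂ)
    (Y : Matrix (l ⊕ l) k ℂ) : hermitianGram (X * N) Y = Nᴴ * hermitianGram X Y := by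
  simp only [hermitianGram, conjTranspose_mul, Matrix.mul_assoc, Matrix.mul_smul]

theorem hermitianGram_symplectic_mul {S : Matrix (l ⊕ l) (l ⊕ l) ℂ} (hS : S ∈ symplecticGroup l ℂ)
    (X : Matrix (l ⊕ l) m ℂ) (Y : Matrix (l ⊕ l) k ℂ) :
    hermitianGram (S * X) (S.map conj * Y) = hermitianGram X Y := by
  have hSconj : Sᴴ * J l ℂ * S.map conj = J l ℂ :=
    SymplecticGroup.mem_iff'.mp (SymplecticGroup.map_mem hS (starRingEnd ℂ))
  have hmul : (S * X)ᴴ * (J l ℂ)ᵀ * (S.map conj * Y) =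
      -(Xᴴ * (Sᴴ * J l ℂ * S.map conj) * Y) := by
    simp only [J_transpose, conjTranspose_mul, Matrix.mul_assoc, Matrix.neg_mul, Matrix.mul_neg]
  rw [hermitianGram, hermitianGram, hmul, hSconj, J_transpose, Matrix.mul_neg, Matrix.neg_mul]

theorem map_conj_hermitianGram (X : Matrix (l ⊕ l) m ℂ) (Y : Matrix (l ⊕ l) k ℂ) :
    (hermitianGram X Y).map conj = -hermitianGram (X.map conj) (Y.map conj) := by
  have hconj : (Xᴴ * (J l ℂ)ᵀ * Y).map conj = Xᵀ * (J l ℂ)ᵀ * Y.map conj := by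
    rw [Matrix.map_mul, Matrix.map_mul, transpose_map, map_J, ← transpose_map_conj_s15,
      transpose_map, map_conj_map_conj_s15]
  have hscalar : conj (Complex.I / 2) = -(Complex.I / 2) := by
    rw [map_div₀, Complex.conj_I, map_ofNat, neg_div]
  rw [hermitianGram, Matrix.map_smulₛₗ _ conj _ (by simp), hconj, hscalar, hermitianGram,
    conjTranspose_map_conj_s15, neg_smul]

end HermitianGram

section Frame

/-- The symplectic metric `G = Ωᵀ Re(Z Zᴴ) Ω` of the range of `Z`, as a real matrix. -/
def symplecticMetric [Fintype m] (Z : Matrix (l ⊕ l) m ℂ) : Matrix (l ⊕ l) (l ⊕ l) ℝ :=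
  (J l ℝ)ᵀ * reMat (Z * Zᴴ) * J l ℝ

/-- A normalised Lagrangian frame: isotropic, with columns orthonormal for the Hermitian form. -/
structure IsNormalizedLagrangianFrame (Z : Matrix (l ⊕ l) l ℂ) : Prop where
  isotropic : IsIsotropic Z
  normalized : Zᴴ * J l ℂ * Z = (2 * Complex.I) • (1 : Matrix l l ℂ)

theorem map_ofReal_symplecticMetric [Fintype m] [DecidableEq m] (Z : Matrix (l ⊕ l) m ℂ) :
    (symplecticMetric Z).map Complex.ofReal =
      (2 : ℂ)⁻¹ • ((J l ℂ)ᵀ *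
        (conjFrame Z * (fromBlocks 0 1 1 0 : Matrix (m ⊕ m) (m ⊕ m) ℂ) * (conjFrame Z)ᵀ) *
          J l ℂ) := by
  have hJ : (J l ℝ).map Complex.ofReal = J l ℂ := map_J l Complex.ofRealHom
  have hmul (A B : Matrix (l ⊕ l) (l ⊕ l) ℝ) :
      (A * B).map Complex.ofReal = A.map Complex.ofReal * B.map Complex.ofReal :=
    Matrix.map_mul (f := Complex.ofRealHom)
  have hsum : conjFrame Z * (fromBlocks 0 1 1 0 : Matrix (m ⊕ m) (m ⊕ m) ℂ) * (conjFrame Z)ᵀ =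
      Z * Zᴴ + (Z * Zᴴ).map conj := by
    rw [conjFrame_transpose, conjFrame, fromCols_mul_fromBlocks, fromCols_mul_fromRows,
      Matrix.map_mul, ← transpose_map_conj_s15 Z, transpose_map, map_conj_map_conj_s15]
    simp [add_comm]
  rw [symplecticMetric, hmul, hmul, transpose_map, hJ, map_ofReal_reMat, hsum, Matrix.mul_smul,
    Matrix.smul_mul]

theorem fromRows_hermitianGram [Fintype m] [DecidableEq m] (Z : Matrix (l ⊕ l) m ℂ)
    (W : Matrix (l ⊕ l) k ℂ) :
    fromRows (hermitianGram Z W) ((hermitianGram Z (W.map conj)).map conj) =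
      (Complex.I / 2) • (J m ℂ * (conjFrame Z)ᵀ * J l ℂ) * W := by
  rw [map_conj_hermitianGram, map_conj_map_conj_s15, conjFrame_transpose, Matrix.smul_mul,
    Matrix.mul_assoc (J m ℂ), fromRows_mul, J_mul_fromRows, fromRows_mul]
  ext (i | i) j <;> simp [hermitianGram, conjTranspose_map_conj_s15, J_transpose]

namespace IsNormalizedLagrangianFrame

variable {Z : Matrix (l ⊕ l) l ℂ}

theorem hermitianGram_self (hZ : IsNormalizedLagrangianFrame Z) : hermitianGram Z Z = 1 := by
  rw [hermitianGram, J_transpose, Matrix.mul_neg, Matrix.neg_mul, hZ.normalized, smul_neg,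
    smul_smul, I_div_two_mul_two_mul_I, neg_smul, one_smul, neg_neg]

theorem conjFrame_transpose_mul_J_mul_conjFrame (hZ : IsNormalizedLagrangianFrame Z) :
    (conjFrame Z)ᵀ * J l ℂ * conjFrame Z = (2 * Complex.I) • J l ℂ := by
  have hconj : Zᴴ * J l ℂ * Z.map conj = 0 := hZ.isotropic.map (starRingEnd ℂ)
  have hcross : Zᵀ * J l ℂ * Z.map conj = -((2 * Complex.I) • (1 : Matrix l l ℂ)) := by
    have h := congrArg transpose hZ.normalized
    rw [transpose_mul, transpose_mul, J_transpose, ← transpose_map_conj_s15, transpose_transpose,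
      Matrix.neg_mul, Matrix.mul_neg, transpose_smul, transpose_one, ← Matrix.mul_assoc] at h
    exact neg_eq_iff_eq_neg.mp h
  rw [conjFrame_transpose, conjFrame, fromRows_mul, fromRows_mul_fromCols, hZ.isotropic, hcross,
    hZ.normalized, hconj]
  simp [J, fromBlocks_smul]

theorem conjFrame_mul_fromRows_hermitianGram (hZ : IsNormalizedLagrangianFrame Z)
    (W : Matrix (l ⊕ l) m ℂ) :
    conjFrame Z * fromRows (hermitianGram Z W) ((hermitianGram Z (W.map conj)).map conj) = W := by
  have hleft : (Complex.I / 2) • (J l ℂ * (conjFrame Z)ᵀ * J l ℂ) * conjFrame Z = 1 := by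
    have hassoc : J l ℂ * (conjFrame Z)ᵀ * J l ℂ * conjFrame Z =
        J l ℂ * ((conjFrame Z)ᵀ * J l ℂ * conjFrame Z) := by
      simp only [Matrix.mul_assoc]
    rw [Matrix.smul_mul, hassoc, hZ.conjFrame_transpose_mul_J_mul_conjFrame, Matrix.mul_smul,
      J_squared, smul_smul, I_div_two_mul_two_mul_I, neg_smul, one_smul, neg_neg]
  rw [fromRows_hermitianGram, ← Matrix.mul_assoc, mul_eq_one_comm.mp hleft, Matrix.one_mul]

theorem conjFrame_transpose_mul_symplecticMetric_mul_conjFrame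
    (hZ : IsNormalizedLagrangianFrame Z) :
    (conjFrame Z)ᵀ * (symplecticMetric Z).map Complex.ofReal * conjFrame Z =
      (2 : ℂ) • fromBlocks 0 1 1 0 := by
  set P := conjFrame Z
  set X : Matrix (l ⊕ l) (l ⊕ l) ℂ := fromBlocks 0 1 1 0
  have hP : Pᵀ * J l ℂ * P = (2 * Complex.I) • J l ℂ :=
    hZ.conjFrame_transpose_mul_J_mul_conjFrame
  have hX : J l ℂ * X * J l ℂ = X := by simp [J, X, fromBlocks_multiply]
  have hscalar : (2 : ℂ)⁻¹ * (2 * Complex.I) * (2 * Complex.I) = -2 := by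
    linear_combination 2 * Complex.I_mul_I
  calc Pᵀ * (symplecticMetric Z).map Complex.ofReal * P
      = -((2 : ℂ)⁻¹ • ((Pᵀ * J l ℂ * P) * X * (Pᵀ * J l ℂ * P))) := by
        rw [map_ofReal_symplecticMetric, J_transpose]
        simp only [P, X, Matrix.mul_assoc, Matrix.neg_mul, Matrix.mul_neg, Matrix.mul_smul,
          Matrix.smul_mul, smul_neg]
    _ = -(((2 : ℂ)⁻¹ * (2 * Complex.I) * (2 * Complex.I)) • (J l ℂ * X * J l ℂ)) := by
        rw [hP]
        simp only [Matrix.smul_mul, Matrix.mul_smul, smul_smul, mul_assoc]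
    _ = (2 : ℂ) • X := by rw [hscalar, hX, neg_smul, neg_neg]

theorem isIsotropic_conjFrame_mul_fromRows_iff (hZ : IsNormalizedLagrangianFrame Z)
    (A B : Matrix l m ℂ) :
    IsIsotropic (conjFrame Z * fromRows A B) ↔ Aᵀ * B = Bᵀ * A := by
  have hform : (conjFrame Z * fromRows A B)ᵀ * J l ℂ * (conjFrame Z * fromRows A B) =
      (2 * Complex.I) • (Bᵀ * A - Aᵀ * B) := by
    calc (conjFrame Z * fromRows A B)ᵀ * J l ℂ * (conjFrame Z * fromRows A B)
        = (fromRows A B)ᵀ * ((conjFrame Z)ᵀ * J l ℂ * conjFrame Z) * fromRows A B := by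
          simp only [transpose_mul, Matrix.mul_assoc]
      _ = (2 * Complex.I) • (Bᵀ * A - Aᵀ * B) := by
          rw [hZ.conjFrame_transpose_mul_J_mul_conjFrame, Matrix.mul_smul, Matrix.smul_mul,
            fromRows_transpose_mul_J_mul_fromRows]
  rw [IsIsotropic, hform, smul_eq_zero_iff_right (mul_ne_zero two_ne_zero Complex.I_ne_zero),
    sub_eq_zero, eq_comm]

theorem transpose_mul_symplecticMetric_mul_conjFrame_mul_fromRows
    (hZ : IsNormalizedLagrangianFrame Z) (A B : Matrix l m ℂ) :
    (conjFrame Z * fromRows A B)ᵀ * (symplecticMetric Z).map Complex.ofReal *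
      (conjFrame Z * fromRows A B) = (2 : ℂ) • (Aᵀ * B + Bᵀ * A) := by
  set G := (symplecticMetric Z).map Complex.ofReal
  calc (conjFrame Z * fromRows A B)ᵀ * G * (conjFrame Z * fromRows A B)
      = (fromRows A B)ᵀ * ((conjFrame Z)ᵀ * G * conjFrame Z) * fromRows A B := by
        simp only [transpose_mul, Matrix.mul_assoc]
    _ = (2 : ℂ) • (Aᵀ * B + Bᵀ * A) := by
        rw [hZ.conjFrame_transpose_mul_symplecticMetric_mul_conjFrame, Matrix.mul_smul,
          Matrix.smul_mul, transpose_fromRows, fromCols_mul_fromBlocks, fromCols_mul_fromRows]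
        simp [add_comm]

variable {W : Matrix (l ⊕ l) m ℂ}

theorem transpose_hermitianGram_mul_comm (hZ : IsNormalizedLagrangianFrame Z)
    (hW : IsIsotropic W) :
    (hermitianGram Z W)ᵀ * (hermitianGram Z (W.map conj)).map conj =
      ((hermitianGram Z (W.map conj)).map conj)ᵀ * hermitianGram Z W := by
  rw [← hZ.isIsotropic_conjFrame_mul_fromRows_iff, hZ.conjFrame_mul_fromRows_hermitianGram]
  exact hW

theorem transpose_mul_symplecticMetric_mul_of_isIsotropic (hZ : IsNormalizedLagrangianFrame Z)
    (hW : IsIsotropic W) :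
    Wᵀ * (symplecticMetric Z).map Complex.ofReal * W =
      (4 : ℂ) • ((hermitianGram Z W)ᵀ * (hermitianGram Z (W.map conj)).map conj) := by
  have hmetric := hZ.transpose_mul_symplecticMetric_mul_conjFrame_mul_fromRows
    (hermitianGram Z W) ((hermitianGram Z (W.map conj)).map conj)
  rw [hZ.conjFrame_mul_fromRows_hermitianGram, ← hZ.transpose_hermitianGram_mul_comm hW,
    ← two_smul ℂ, smul_smul] at hmetric
  rw [hmetric]
  norm_num

end IsNormalizedLagrangianFrame

end Frame

theorem stmt15_general {Z₀ : Matrix (l ⊕ l) l ℂ} {S : Matrix (l ⊕ l) (l ⊕ l) ℂ} {N : Matrix l l ℂ}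
    (hZ₀ : IsNormalizedLagrangianFrame Z₀) (hS : S ∈ symplecticGroup l ℂ)
    (hZnorm : (S * Z₀ * N)ᴴ * J l ℂ * (S * Z₀ * N) = (2 * Complex.I) • (1 : Matrix l l ℂ)) :
    let Z := S * Z₀ * N
    let W := S * Z₀.map conj
    let G := (symplecticMetric Z).map Complex.ofReal
    let C := (Complex.I / 2) • (Zᴴ * (J l ℂ)ᵀ * S.map conj * Z₀)
    let D := (Complex.I / 2) • (Zᴴ * (J l ℂ)ᵀ * S * Z₀.map conj)
    C = Nᴴ ∧ Dᵀ * C.map conj = (4 : ℂ)⁻¹ • (Wᵀ * G * W) ∧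
      (Dᵀ * C.map conj)ᵀ = Dᵀ * C.map conj := by
  intro Z W G C D
  have hZ : IsNormalizedLagrangianFrame Z :=
    ⟨(hZ₀.isotropic.symplectic_mul hS).mul_right N, hZnorm⟩
  have hW : IsIsotropic W := (hZ₀.isotropic.map (starRingEnd ℂ)).symplectic_mul hS
  have hWconj : W.map conj = S.map conj * Z₀ := by rw [Matrix.map_mul, map_conj_map_conj_s15]
  have hC : C = hermitianGram Z (W.map conj) := by
    rw [hWconj, hermitianGram, ← Matrix.mul_assoc]
  have hD : D = hermitianGram Z W := by rw [hermitianGram, ← Matrix.mul_assoc]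
  refine ⟨?_, ?_, ?_⟩
  · rw [hC, hWconj, show Z = S * (Z₀ * N) from Matrix.mul_assoc S Z₀ N,
      hermitianGram_symplectic_mul hS, hermitianGram_mul_left, hZ₀.hermitianGram_self,
      Matrix.mul_one]
  · rw [hC, hD, hZ.transpose_mul_symplecticMetric_mul_of_isIsotropic hW,
      inv_smul_smul₀ four_ne_zero]
  · rw [hC, hD, hZ.transpose_hermitianGram_mul_comm hW, transpose_mul, transpose_transpose,
      hZ.transpose_hermitianGram_mul_comm hW]

theorem stmt15 (n : ℕ) (hn : 1 ≤ n)
    (Z₀ : Matrix (Fin n ⊕ Fin n) (Fin n) ℂ)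
    (S : Matrix (Fin n ⊕ Fin n) (Fin n ⊕ Fin n) ℂ)
    (N : Matrix (Fin n) (Fin n) ℂ)
    (hZ₀iso : Z₀ᵀ * Omc n * Z₀ = 0)
    (hZ₀norm : Z₀ᴴ * Omc n * Z₀ = (2 * Complex.I) • (1 : Matrix (Fin n) (Fin n) ℂ))
    (hS : Sᵀ * Omc n * S = Omc n)
    (hN : N.PosDef)
    (hZnorm : (S * Z₀ * N)ᴴ * Omc n * (S * Z₀ * N) =
      (2 * Complex.I) • (1 : Matrix (Fin n) (Fin n) ℂ))
    (hposL : ∀ c : Fin n → ℂ, (S * Z₀ * N).mulVec c ≠ 0 →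
      0 < (hformN n ((S * Z₀ * N).mulVec c) ((S * Z₀ * N).mulVec c)).re ∧
        (hformN n ((S * Z₀ * N).mulVec c) ((S * Z₀ * N).mulVec c)).im = 0) :
    let Z := S * Z₀ * N
    let G := ((Omr n)ᵀ * reMat (Z * Zᴴ) * Omr n).map Complex.ofReal
    let C := (Complex.I / 2) • (Zᴴ * (Omc n)ᵀ * S.map (starRingEnd ℂ) * Z₀)
    let D := (Complex.I / 2) • (Zᴴ * (Omc n)ᵀ * S * Z₀.map (starRingEnd ℂ))
    -- (i) C = N
    (C = N) ∧
    -- (ii) M = Dᵀ C̄ = (1/4) (S Z̄₀)ᵀ G (S Z̄₀)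
    (Dᵀ * C.map (starRingEnd ℂ) =
      ((4 : ℂ)⁻¹) • ((S * Z₀.map (starRingEnd ℂ))ᵀ * G * (S * Z₀.map (starRingEnd ℂ)))) ∧
    -- (iii) M is symmetric
    ((Dᵀ * C.map (starRingEnd ℂ))ᵀ = Dᵀ * C.map (starRingEnd ℂ)) := by
  obtain ⟨hC, hM, hMsymm⟩ :=
    stmt15_general ⟨hZ₀iso, hZ₀norm⟩ (SymplecticGroup.mem_iff'.mpr hS) hZnorm
  exact ⟨hC.trans hN.isHermitian, hM, hMsymm⟩
end
end

section
/- Let n ≥ 1, let M ∈ ℂ^{n×n} be symmetric (M = Mᵀ), let c ∈ ℂ, and let p : ℕⁿ → ℂ[x₁,…,xₙ] be a family of multivariate polynomials satisfying the recursion p₀ = c and, for every α ∈ ℕⁿ and every j ∈ {1,…,n}, p_{α+eⱼ} = xⱼ·p_α − Σ_{k=1}^{n} M_{jk}·∂p_α/∂x_k, where eⱼ is the j-th standard unit multi-index. Then for every α ∈ ℕⁿ and every k ∈ {1,…,n}: if α_k ≥ 1 then ∂p_α/∂x_k = α_k·p_{α−e_k}, and if α_k = 0 then ∂p_α/∂x_k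 = 0. -/
open Matrix

noncomputable section

/-!
Write `D k = ∂/∂x_k` and `A j = x_j - ∑ₖ M j k ∂/∂x_k`, so that the recursion reads
`p (α + e_j) = A j (p α)`. As partial derivatives commute with one another, these operators
satisfy the canonical commutation relations `D k ∘ A j - A j ∘ D k = δ_{kj}`. Since `D k` kills
the constant `p 0`, moving it through the raising operators that build `p α` from `p 0` leaves one
term for each of the `α k` factors `A k`.
-/

section MultiIndex

variable {ι : Type*} [DecidableEq ι] {α : ι → ℕ} {i j : ι}

theorem tsub_single_add_single_self (hi : α i ≠ 0) :
    α - Pi.single i 1 + Pi.single i 1 = α := by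
  refine tsub_add_cancel_of_le (update_le_iff.mpr ⟨Nat.one_le_iff_ne_zero.mpr hi, ?_⟩)
  exact fun l _ => Nat.zero_le (α l)

theorem tsub_single_add_single_of_ne (α : ι → ℕ) (hij : i ≠ j) :
    α - Pi.single i 1 + Pi.single j 1 = α + Pi.single j 1 - Pi.single i 1 := by
  ext l
  rcases eq_or_ne l i with rfl | hl
  · simp [hij]
  · simp [hl]

theorem multiIndex_induction [Finite ι] {P : (ι → ℕ) → Prop} (zero : P 0)
    (add_single : ∀ α j, P α → P (α + Pi.single j 1)) (α : ι → ℕ) : P α := by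
  induction α using WellFoundedLT.induction with
  | ind α ih =>
    rcases eq_or_ne α 0 with rfl | hα
    · exact zero
    · obtain ⟨j, hj⟩ := Function.ne_iff.mp hα
      have hcancel : α - Pi.single j 1 + Pi.single j 1 = α := tsub_single_add_single_self hj
      have hlt : α - Pi.single j 1 < α - Pi.single j 1 + Pi.single j 1 :=
        lt_add_of_pos_right _ (Pi.single_pos.mpr one_pos)
      rw [hcancel] at hlt
      exact hcancel ▸ add_single _ j (ih _ hlt)

end MultiIndex

section LadderOperators

variable {ι V F : Type*} [DecidableEq ι] [Finite ι] [AddCommMonoid V] [FunLike F V V]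
  [AddMonoidHomClass F V V]

/-- When `α i = 0` the multi-index `α - Pi.single i 1` is truncated to `α`, and the right-hand side
vanishes because of its coefficient. -/
theorem lowering_apply_eq_nsmul {D : ι → V → V} {A : ι → F} {v : (ι → ℕ) → V}
    (hcomm : ∀ i j x, D i (A j x) = A j (D i x) + if i = j then x else 0)
    (hvacuum : ∀ i, D i (v 0) = 0) (hraise : ∀ α j, v (α + Pi.single j 1) = A j (v α))
    (α : ι → ℕ) (i : ι) : D i (v α) = α i • v (α - Pi.single i 1) := by
  induction α using multiIndex_induction with
  | zero => rw [hvacuum, Pi.zero_apply, zero_nsmul]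
  | add_single α j ih =>
    have hstep : D i (v (α + Pi.single j 1)) =
        α i • v (α - Pi.single i 1 + Pi.single j 1) + if i = j then v α else 0 := by
      rw [hraise, hcomm, ih, map_nsmul, hraise]
    rw [hstep]
    rcases eq_or_ne i j with rfl | hij
    · have hcancel : α i • v (α - Pi.single i 1 + Pi.single i 1) = α i • v α := by
        rcases eq_or_ne (α i) 0 with hi | hi
        · rw [hi, zero_nsmul, zero_nsmul]
        · rw [tsub_single_add_single_self hi]
      rw [hcancel, if_pos rfl, add_tsub_cancel_right, Pi.add_apply, Pi.single_eq_same, succ_nsmul]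
    · rw [if_neg hij, add_zero, tsub_single_add_single_of_ne α hij, Pi.add_apply,
        Pi.single_eq_of_ne hij, add_zero]

end LadderOperators

section Polynomial

open MvPolynomial

variable {σ R : Type*}

theorem pderiv_pderiv_comm [CommSemiring R] (i j : σ) (f : MvPolynomial σ R) :
    pderiv i (pderiv j f) = pderiv j (pderiv i f) := by
  induction f using MvPolynomial.induction_on with
  | C a => simp only [pderiv_C, map_zero]
  | add f g hf hg => simp only [map_add, hf, hg]
  | mul_X f k hf =>
    have hX (a b : σ) : pderiv a (pderiv b (X k : MvPolynomial σ R)) = 0 := by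
      rcases eq_or_ne k b with rfl | hb
      · rw [pderiv_X_self, pderiv_one]
      · rw [pderiv_X_of_ne hb, map_zero]
    simp only [pderiv_mul, map_add, hf, hX]
    ring

variable [CommRing R] [Fintype σ]

/-- The raising operator `f ↦ x_j f - ∑ₖ M j k ∂f/∂x_k` of the recursion, as a linear map. -/
def raisingOperator (M : Matrix σ σ R) (j : σ) : MvPolynomial σ R →ₗ[R] MvPolynomial σ R :=
  LinearMap.mulLeft R (X j) - ∑ k, M j k • (pderiv k).toLinearMap

theorem raisingOperator_apply (M : Matrix σ σ R) (j : σ) (f : MvPolynomial σ R) :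
    raisingOperator M j f = X j * f - ∑ k, C (M j k) * pderiv k f := by
  simp [raisingOperator, C_mul']

theorem pderiv_raisingOperator [DecidableEq σ] (M : Matrix σ σ R) (i j : σ)
    (f : MvPolynomial σ R) :
    pderiv i (raisingOperator M j f) =
      raisingOperator M j (pderiv i f) + if i = j then f else 0 := by
  have hX : pderiv i (X j * f) = X j * pderiv i f + if i = j then f else 0 := by
    rcases eq_or_ne i j with rfl | hij
    · rw [pderiv_mul, pderiv_X_self, one_mul, if_pos rfl, add_comm]
    · rw [pderiv_mul, pderiv_X_of_ne hij.symm, zero_mul, if_neg hij, add_comm]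
  have hsum : pderiv i (∑ k, C (M j k) * pderiv k f) =
      ∑ k, C (M j k) * pderiv k (pderiv i f) := by
    simp only [map_sum, pderiv_C_mul, pderiv_pderiv_comm i]
  rw [raisingOperator_apply, raisingOperator_apply, map_sub, hX, hsum, add_sub_right_comm]

theorem stmt17_general [DecidableEq σ] (M : Matrix σ σ R) (c : R)
    (p : (σ → ℕ) → MvPolynomial σ R) (h0 : p 0 = C c)
    (hrec : ∀ α j, p (α + Pi.single j 1) = X j * p α - ∑ k, C (M j k) * pderiv k (p α))
    (α : σ → ℕ) (k : σ) : pderiv k (p α) = α k • p (α - Pi.single k 1) := by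
  have hvacuum (i : σ) : pderiv i (p 0) = 0 := by rw [h0, pderiv_C]
  have hraise (β : σ → ℕ) (j : σ) : p (β + Pi.single j 1) = raisingOperator M j (p β) := by
    rw [hrec, raisingOperator_apply]
  exact lowering_apply_eq_nsmul (D := fun i => pderiv i) (pderiv_raisingOperator M)
    hvacuum hraise α k

end Polynomial

theorem stmt17 (n : ℕ) (hn : 1 ≤ n)
    (M : Matrix (Fin n) (Fin n) ℂ) (hM : M = Mᵀ) (c : ℂ)
    (p : (Fin n → ℕ) → MvPolynomial (Fin n) ℂ)
    (h0 : p 0 = MvPolynomial.C c)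
    (hrec : ∀ (α : Fin n → ℕ) (j : Fin n),
      p (α + Pi.single j 1) =
        MvPolynomial.X j * p α -
          ∑ k, MvPolynomial.C (M j k) * MvPolynomial.pderiv k (p α)) :
    ∀ (α : Fin n → ℕ) (k : Fin n),
      (1 ≤ α k →
        MvPolynomial.pderiv k (p α) =
          MvPolynomial.C ((α k : ℂ)) * p (α - Pi.single k 1)) ∧
      (α k = 0 → MvPolynomial.pderiv k (p α) = 0) := by
  have key := stmt17_general M c p h0 hrec
  exact fun α k => ⟨fun _ => by simp [key], fun hk => by simp [key, hk]⟩
end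
end

section
/- Let ω₀, δ > 0, ω := √(ω₀² + δ²), H = [[ω₀, −iδ],[−iδ, ω₀]] ∈ ℂ^{2×2}, and S(t) := cos(tω)·I₂ + (sin(tω)/ω)·ΩH (which equals exp(t·ΩH)). Let l₀ := (1, −i) ∈ ℂ², which satisfies h(l₀, l₀) = 1. Then for all t ∈ ℝ: h(S(t)l₀, S(t)l₀) = 1 − (δ²/ω²)·(1 − cos(2tω)). Consequently: (i) if ω₀ > δ, then h(S(t)l₀, S(t)l₀) > 0 for all t ∈ ℝ, so the Lagrangian line spanned by S(t)l₀ is positive for all times; (ii) if δ ≥ ω₀, then, with T := arccos(−ω₀²/δ²)/(2ω), one has h(S(t)l₀, S(t)l₀) > 0 for 0 ≤ t < T and h(S(T)l₀, S(T)l₀) = 0. -/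
open Matrix

noncomputable section

/-- The Hermitian form `h(z, z') = (i/2) ⬝ z̄ · (Ωᵀ z')` on `ℂ²`,
with `Ω = [[0, -1], [1, 0]]`. -/
def hform2 (z z' : Fin 2 → ℂ) : ℂ :=
  (Complex.I / 2) *
    (star z ⬝ᵥ ((!![0, -1; 1, 0] : Matrix (Fin 2) (Fin 2) ℂ)ᵀ *ᵥ z'))

/-! Complex conjugation changes the sign of `h(z, z)`, and `z` is `h`-orthogonal to `z̄`, so
`h(a z + b z̄, a z + b z̄) = (|a|² - |b|²) h(z, z)`. The generator sends `l₀` to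
`ΩH l₀ = i (ω₀ l₀ + δ l̄₀)`; hence `S(t) l₀ = (cos (tω) + i s ω₀) l₀ + i s δ l̄₀` with
`s = sin (tω) / ω`, and
`h(S(t) l₀, S(t) l₀) = cos² (tω) + s² (ω₀² - δ²) = (ω₀² + δ² cos (2tω)) / ω²`.
If `|δ| < |ω₀|` this never vanishes; otherwise its first zero is where
`cos (2tω) = -ω₀² / δ²`. -/

section HermitianForm

theorem hform2_eq (z z' : Fin 2 → ℂ) :
    hform2 z z' = Complex.I / 2 * (star (z 0) * z' 1 - star (z 1) * z' 0) := by
  simp [hform2, mulVec, dotProduct, Fin.sum_univ_two, sub_eq_add_neg]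

theorem hform2_smul_add_smul_star (a b : ℂ) (z : Fin 2 → ℂ) :
    hform2 (a • z + b • star z) (a • z + b • star z) =
      ((‖a‖ ^ 2 - ‖b‖ ^ 2 : ℝ) : ℂ) * hform2 z z := by
  push_cast
  rw [← Complex.conj_mul' a, ← Complex.conj_mul' b]
  simp only [hform2_eq, Pi.add_apply, Pi.smul_apply, Pi.star_apply, smul_eq_mul, star_add,
    star_mul', star_star, starRingEnd_apply]
  ring

theorem hform2_smul_one_add_smul_mulVec {K : Matrix (Fin 2) (Fin 2) ℂ} {z : Fin 2 → ℂ} {p q : ℝ}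
    (hK : K *ᵥ z = Complex.I • ((p : ℂ) • z + (q : ℂ) • star z)) (c s : ℝ) :
    hform2 (((c : ℂ) • (1 : Matrix (Fin 2) (Fin 2) ℂ) + (s : ℂ) • K) *ᵥ z)
        (((c : ℂ) • (1 : Matrix (Fin 2) (Fin 2) ℂ) + (s : ℂ) • K) *ᵥ z) =
      ((c ^ 2 + s ^ 2 * (p ^ 2 - q ^ 2) : ℝ) : ℂ) * hform2 z z := by
  have image_eq : ((c : ℂ) • (1 : Matrix (Fin 2) (Fin 2) ℂ) + (s : ℂ) • K) *ᵥ z =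
      ((c : ℂ) + (s * p : ℝ) * Complex.I) • z + ((s * q : ℝ) * Complex.I) • star z := by
    rw [add_mulVec, smul_mulVec, smul_mulVec, one_mulVec, hK]
    push_cast
    module
  have norm_sq_left : ‖(c : ℂ) + (s * p : ℝ) * Complex.I‖ ^ 2 = c ^ 2 + (s * p) ^ 2 := by
    rw [Complex.sq_norm, Complex.normSq_add_mul_I]
  have norm_sq_right : ‖((s * q : ℝ) : ℂ) * Complex.I‖ ^ 2 = (s * q) ^ 2 := by
    rw [norm_mul, Complex.norm_I, mul_one, Complex.norm_real, Real.norm_eq_abs, sq_abs]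
  rw [image_eq, hform2_smul_add_smul_star, norm_sq_left, norm_sq_right]
  congr 2
  ring

end HermitianForm

section Trigonometry

theorem cos_sq_add_sin_div_sq_mul {ω p q : ℝ} (hω : ω ≠ 0) (hsq : ω ^ 2 = p ^ 2 + q ^ 2) (x : ℝ) :
    Real.cos x ^ 2 + (Real.sin x / ω) ^ 2 * (p ^ 2 - q ^ 2) =
      1 - q ^ 2 / ω ^ 2 * (1 - Real.cos (2 * x)) := by
  have hp : p ^ 2 = ω ^ 2 - q ^ 2 := by linarith
  rw [Real.cos_two_mul, div_pow, Real.sin_sq, hp]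
  field_simp
  ring

theorem lt_cos_of_abs_lt_arccos {x y : ℝ} (h : |x| < Real.arccos y) : y < Real.cos x := by
  by_contra! hxy
  have : Real.arccos y ≤ |x| := by
    rw [← Real.arccos_cos (abs_nonneg x) (h.le.trans (Real.arccos_le_pi y)), Real.cos_abs]
    exact Real.antitone_arccos hxy
  exact h.not_ge this

end Trigonometry

namespace DaviesSwanson

/-- The standard symplectic matrix `Ω`. -/
def symplecticMatrix : Matrix (Fin 2) (Fin 2) ℂ := !![0, -1; 1, 0]

/-- The complex symmetric matrix `H` of the Davies–Swanson oscillator. -/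
def hamiltonian (ω₀ δ : ℝ) : Matrix (Fin 2) (Fin 2) ℂ :=
  !![(ω₀ : ℂ), -(Complex.I * (δ : ℂ)); -(Complex.I * (δ : ℂ)), (ω₀ : ℂ)]

/-- The frequency `ω` of the oscillator. -/
def frequency (ω₀ δ : ℝ) : ℝ := Real.sqrt (ω₀ ^ 2 + δ ^ 2)

/-- The flow `S(t) = exp(t ΩH)`. It is given in closed form, which comes from `(ΩH)² = -ω²`. -/
def flow (ω₀ δ t : ℝ) : Matrix (Fin 2) (Fin 2) ℂ :=
  ((Real.cos (t * frequency ω₀ δ) : ℝ) : ℂ) • (1 : Matrix (Fin 2) (Fin 2) ℂ) +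
    ((Real.sin (t * frequency ω₀ δ) / frequency ω₀ δ : ℝ) : ℂ) •
      (symplecticMatrix * hamiltonian ω₀ δ)

/-- The vector `l₀` spanning the initial Lagrangian line. -/
def initialVector : Fin 2 → ℂ := ![1, -Complex.I]

/-- The time `T` at which the line spanned by `S(t) l₀` first ceases to be positive. It has this
meaning only for `|ω₀| ≤ |δ|` and `δ ≠ 0`: otherwise `arccos` is clamped or the quotient is `0`. -/
def degeneracyTime (ω₀ δ : ℝ) : ℝ :=
  Real.arccos (-(ω₀ ^ 2 / δ ^ 2)) / (2 * frequency ω₀ δ)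

theorem frequency_sq (ω₀ δ : ℝ) : frequency ω₀ δ ^ 2 = ω₀ ^ 2 + δ ^ 2 :=
  Real.sq_sqrt (by positivity)

theorem star_initialVector : star initialVector = ![1, Complex.I] := by
  ext i
  fin_cases i <;> simp [initialVector]

theorem hform2_initialVector : hform2 initialVector initialVector = 1 := by
  simp only [hform2_eq, initialVector, cons_val_zero, cons_val_one, star_one, star_neg,
    Complex.star_def, Complex.conj_I]
  linear_combination (-1 : ℂ) * Complex.I_sq

theorem symplecticMatrix_mul_hamiltonian (ω₀ δ : ℝ) :
    symplecticMatrix * hamiltonian ω₀ δ =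
      !![Complex.I * (δ : ℂ), -(ω₀ : ℂ); (ω₀ : ℂ), -(Complex.I * (δ : ℂ))] := by
  simp [symplecticMatrix, hamiltonian]

theorem generator_mulVec_initialVector (ω₀ δ : ℝ) :
    (symplecticMatrix * hamiltonian ω₀ δ) *ᵥ initialVector =
      Complex.I • ((ω₀ : ℂ) • initialVector + (δ : ℂ) • star initialVector) := by
  rw [symplecticMatrix_mul_hamiltonian, star_initialVector, initialVector]
  simp only [cons_mulVec, empty_mulVec, vec2_dotProduct', smul_cons, smul_empty, vec2_add,
    smul_eq_mul]
  refine vec2_eq ?_ ?_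
  · ring
  · linear_combination (ω₀ : ℂ) * Complex.I_sq

variable {ω₀ δ : ℝ}

theorem frequency_pos (hω : 0 < ω₀ ^ 2 + δ ^ 2) : 0 < frequency ω₀ δ :=
  Real.sqrt_pos.mpr hω

theorem hform2_flow (hω : 0 < ω₀ ^ 2 + δ ^ 2) (t : ℝ) :
    hform2 (flow ω₀ δ t *ᵥ initialVector) (flow ω₀ δ t *ᵥ initialVector) =
      ((1 - δ ^ 2 / frequency ω₀ δ ^ 2 *
        (1 - Real.cos (2 * t * frequency ω₀ δ)) : ℝ) : ℂ) := by
  rw [flow, hform2_smul_one_add_smul_mulVec (generator_mulVec_initialVector ω₀ δ),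
    hform2_initialVector, mul_one,
    cos_sq_add_sin_div_sq_mul (frequency_pos hω).ne' (frequency_sq ω₀ δ), mul_assoc 2]

theorem hform2_flow_eq_div (hω : 0 < ω₀ ^ 2 + δ ^ 2) (t : ℝ) :
    hform2 (flow ω₀ δ t *ᵥ initialVector) (flow ω₀ δ t *ᵥ initialVector) =
      (((ω₀ ^ 2 + δ ^ 2 * Real.cos (2 * t * frequency ω₀ δ)) / (ω₀ ^ 2 + δ ^ 2) : ℝ) : ℂ) := by
  rw [hform2_flow hω, frequency_sq]
  congr 1
  field_simp
  ring

theorem re_hform2_flow_pos_iff (hω : 0 < ω₀ ^ 2 + δ ^ 2) (t : ℝ) :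
    0 < (hform2 (flow ω₀ δ t *ᵥ initialVector) (flow ω₀ δ t *ᵥ initialVector)).re ↔
      0 < ω₀ ^ 2 + δ ^ 2 * Real.cos (2 * t * frequency ω₀ δ) := by
  rw [hform2_flow_eq_div hω, Complex.ofReal_re, div_pos_iff_of_pos_right hω]

theorem re_hform2_flow_pos_of_abs_lt (h : |δ| < |ω₀|) (t : ℝ) :
    0 < (hform2 (flow ω₀ δ t *ᵥ initialVector) (flow ω₀ δ t *ᵥ initialVector)).re := by
  have hsq : δ ^ 2 < ω₀ ^ 2 := sq_lt_sq.mpr h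
  rw [re_hform2_flow_pos_iff (by linarith [sq_nonneg δ])]
  have := mul_le_mul_of_nonneg_left (Real.neg_one_le_cos (2 * t * frequency ω₀ δ)) (sq_nonneg δ)
  linarith

theorem re_hform2_flow_pos_of_abs_lt_degeneracyTime (hδ : δ ≠ 0) {t : ℝ}
    (ht : |t| < degeneracyTime ω₀ δ) :
    0 < (hform2 (flow ω₀ δ t *ᵥ initialVector) (flow ω₀ δ t *ᵥ initialVector)).re := by
  have hω : 0 < ω₀ ^ 2 + δ ^ 2 := by positivity
  have hfreq := frequency_pos hω
  have phase_lt : |2 * t * frequency ω₀ δ| < Real.arccos (-(ω₀ ^ 2 / δ ^ 2)) := by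
    rw [degeneracyTime, lt_div_iff₀ (by positivity)] at ht
    rw [abs_mul, abs_mul, abs_two, abs_of_pos hfreq]
    linarith
  have hcos := lt_cos_of_abs_lt_arccos phase_lt
  rw [← neg_div, div_lt_iff₀ (by positivity)] at hcos
  rw [re_hform2_flow_pos_iff hω]
  linarith

theorem hform2_flow_degeneracyTime (hδ : δ ≠ 0) (h : |ω₀| ≤ |δ|) :
    hform2 (flow ω₀ δ (degeneracyTime ω₀ δ) *ᵥ initialVector)
      (flow ω₀ δ (degeneracyTime ω₀ δ) *ᵥ initialVector) = 0 := by
  have hω : 0 < ω₀ ^ 2 + δ ^ 2 := by positivity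
  have hfreq := frequency_pos hω
  have phase_eq : 2 * degeneracyTime ω₀ δ * frequency ω₀ δ =
      Real.arccos (-(ω₀ ^ 2 / δ ^ 2)) := by
    rw [degeneracyTime]
    field_simp
  have ratio_le_one : ω₀ ^ 2 / δ ^ 2 ≤ 1 := div_le_one_of_le₀ (sq_le_sq.mpr h) (sq_nonneg δ)
  have ratio_nonneg : 0 ≤ ω₀ ^ 2 / δ ^ 2 := by positivity
  rw [hform2_flow_eq_div hω, phase_eq, Real.cos_arccos (by linarith) (by linarith), mul_neg,
    mul_div_cancel₀ _ (pow_ne_zero 2 hδ), add_neg_cancel, zero_div, Complex.ofReal_zero]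

end DaviesSwanson

open DaviesSwanson in
theorem stmt19_general {ω₀ δ : ℝ} (hω : 0 < ω₀ ^ 2 + δ ^ 2) :
    hform2 initialVector initialVector = 1 ∧
    (∀ t : ℝ, hform2 (flow ω₀ δ t *ᵥ initialVector) (flow ω₀ δ t *ᵥ initialVector) =
      ((1 - δ ^ 2 / frequency ω₀ δ ^ 2 *
        (1 - Real.cos (2 * t * frequency ω₀ δ)) : ℝ) : ℂ)) ∧
    (|δ| < |ω₀| → ∀ t : ℝ,
      0 < (hform2 (flow ω₀ δ t *ᵥ initialVector) (flow ω₀ δ t *ᵥ initialVector)).re) ∧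
    (|ω₀| ≤ |δ| →
      (∀ t : ℝ, |t| < degeneracyTime ω₀ δ →
        0 < (hform2 (flow ω₀ δ t *ᵥ initialVector) (flow ω₀ δ t *ᵥ initialVector)).re) ∧
      hform2 (flow ω₀ δ (degeneracyTime ω₀ δ) *ᵥ initialVector)
        (flow ω₀ δ (degeneracyTime ω₀ δ) *ᵥ initialVector) = 0) := by
  refine ⟨hform2_initialVector, hform2_flow hω, re_hform2_flow_pos_of_abs_lt, fun h => ?_⟩
  have hδ : δ ≠ 0 := by
    rintro rfl
    simp_all
  exact ⟨fun _ => re_hform2_flow_pos_of_abs_lt_degeneracyTime hδ, hform2_flow_degeneracyTime hδ h⟩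

theorem stmt19 (ω₀ δ : ℝ) (hω₀ : 0 < ω₀) (hδ : 0 < δ) :
    let ω := Real.sqrt (ω₀ ^ 2 + δ ^ 2)
    let H : Matrix (Fin 2) (Fin 2) ℂ :=
      !![(ω₀ : ℂ), -(Complex.I * (δ : ℂ)); -(Complex.I * (δ : ℂ)), (ω₀ : ℂ)]
    let Om2 : Matrix (Fin 2) (Fin 2) ℂ := !![0, -1; 1, 0]
    let S : ℝ → Matrix (Fin 2) (Fin 2) ℂ := fun t =>
      ((Real.cos (t * ω) : ℝ) : ℂ) • (1 : Matrix (Fin 2) (Fin 2) ℂ) +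
        ((Real.sin (t * ω) / ω : ℝ) : ℂ) • (Om2 * H)
    let l₀ : Fin 2 → ℂ := ![1, -Complex.I]
    -- h(l₀, l₀) = 1
    (hform2 l₀ l₀ = 1) ∧
    -- the explicit formula for h(S(t)l₀, S(t)l₀)
    (∀ t : ℝ, hform2 (S t *ᵥ l₀) (S t *ᵥ l₀) =
      ((1 - δ ^ 2 / ω ^ 2 * (1 - Real.cos (2 * t * ω)) : ℝ) : ℂ)) ∧
    -- (i) if ω₀ > δ the Lagrangian line stays positive for all times
    (ω₀ > δ → ∀ t : ℝ, 0 < (hform2 (S t *ᵥ l₀) (S t *ᵥ l₀)).re) ∧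
    -- (ii) if δ ≥ ω₀, positivity holds on [0, T) and degenerates at T
    (δ ≥ ω₀ →
      let T := Real.arccos (-(ω₀ ^ 2 / δ ^ 2)) / (2 * ω)
      (∀ t : ℝ, 0 ≤ t → t < T → 0 < (hform2 (S t *ᵥ l₀) (S t *ᵥ l₀)).re) ∧
        hform2 (S T *ᵥ l₀) (S T *ᵥ l₀) = 0) := by
  obtain ⟨initial, formula, positive, degenerate⟩ :=
    stmt19_general (ω₀ := ω₀) (δ := δ) (by positivity)
  rw [abs_of_pos hω₀, abs_of_pos hδ] at positive degenerate
  exact ⟨initial, formula, positive, fun h => (degenerate h).imp_left fun pos t ht₀ ht =>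
    pos t ((abs_of_nonneg ht₀).trans_lt ht)⟩
end
end
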